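/- arXiv:2401.01385 — 4 statements merged into one kernel-verified Lean document; each statement's English description precedes it below -/
import Mathlib

section
/- For every positive integer m, the value at x = 1/2 of the (2m)-th derivative of z(x) = ₂F₁(1/2,1/2;1;x) is a rational multiple of Γ(1/4)^2 / π^{3/2}, and the value of the (2m-1)-th derivative at x = 1/2 is a rational multiple of √π / Γ(1/4)^2. -/
/-- Ascending Pochhammer symbol `(a)_n = a(a+1)⋯(a+n-1)`. -/
noncomputable def poch (a : ℝ) (n : ℕ) : ℝ := ∏ i ∈ Finset.range n, (a + i)

/-- Gaussian hypergeometric series `₂F₁(a,b;c;x)`. -/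
noncomputable def hypF (a b c x : ℝ) : ℝ :=
  ∑' m : ℕ, poch a m * poch b m / poch c m * x ^ m / m.factorial

/-!
For `c = (a + b + 1) / 2` the substitution `t = 2u / (1 + u)` turns Euler's integral for
`₂F₁ a b c (1 / 2)` into a beta integral in `u²`, which gives Gauss's second summation theorem.
Differentiating `₂F₁` raises each of `a`, `b`, `c` by one and so preserves that relation between
them; hence every derivative at `1 / 2` is explicit, and for `a = b = 1 / 2` the `n`-th one is
`((1/2)_n)² √π / Γ(n/2 + 3/4)²`. The functional equation of `Γ` reduces the denominator to
`Γ(1/4)²` for odd `n` and to `Γ(3/4)²` for even `n`, and the reflection formula trades `Γ(3/4)` for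
`Γ(1/4)`.
-/

open Polynomial Filter Topology Set MeasureTheory
open ProbabilityTheory (beta beta_pos)
open Real (Gamma)
open scoped Nat Real

theorem ascPochhammer_succ_eval_left {S : Type*} [CommSemiring S] (n : ℕ) (a : S) :
    (ascPochhammer S (n + 1)).eval a = a * (ascPochhammer S n).eval (a + 1) := by
  simp [ascPochhammer_succ_left, eval_comp]

theorem ratCast_ascPochhammer_eval {K : Type*} [Field K] [CharZero K] (q : ℚ) (n : ℕ) :
    (((ascPochhammer ℚ n).eval q : ℚ) : K) = (ascPochhammer K n).eval (q : K) := by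
  rw [← Rat.coe_castHom, ← eval₂_at_apply, ← ascPochhammer_eval₂]

theorem mem_eball_zero_one_iff {E : Type*} [SeminormedAddCommGroup E] {x : E} :
    x ∈ Metric.eball (0 : E) 1 ↔ ‖x‖ < 1 := by
  rw [← ENNReal.ofReal_one, Metric.eball_ofReal, mem_ball_zero_iff]

theorem succ_mul_ordinaryHypergeometricCoefficient_succ {𝕂 : Type*} [Field 𝕂] [CharZero 𝕂]
    (a b c : 𝕂) (n : ℕ) :
    (n + 1) * ordinaryHypergeometricCoefficient a b c (n + 1) =
      a * b / c * ordinaryHypergeometricCoefficient (a + 1) (b + 1) (c + 1) n := by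
  have : (n + 1 : 𝕂) ≠ 0 := n.cast_add_one_ne_zero
  simp only [ordinaryHypergeometricCoefficient, ascPochhammer_succ_eval_left, Nat.factorial_succ,
    Nat.cast_mul, Nat.cast_add_one, mul_inv]
  field_simp

section Series

variable {𝕂 : Type*} [RCLike 𝕂]

theorem one_le_ordinaryHypergeometricSeries_radius (𝔸 : Type*) [NormedDivisionRing 𝔸]
    [NormedAlgebra 𝕂 𝔸] (a b c : 𝕂) : 1 ≤ (ordinaryHypergeometricSeries 𝔸 a b c).radius := by
  by_cases h : ∀ k : ℕ, (k : 𝕂) ≠ -a ∧ (k : 𝕂) ≠ -b ∧ (k : 𝕂) ≠ -c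
  · exact (ordinaryHypergeometricSeries_radius_eq_one 𝔸 a b c h).ge
  · obtain ⟨k, ha | hb | hc⟩ : ∃ k : ℕ, a = -k ∨ b = -k ∨ c = -k := by
      simp only [not_forall, not_and_or, not_not, eq_neg_iff_add_eq_zero] at h ⊢
      simpa only [add_comm] using h
    · simp [ha, ordinaryHypergeometric_radius_top_of_neg_nat₁]
    · simp [hb, ordinaryHypergeometric_radius_top_of_neg_nat₂]
    · simp [hc, ordinaryHypergeometric_radius_top_of_neg_nat₃]

theorem hasFPowerSeriesOnBall_ordinaryHypergeometric (a b c : 𝕂) :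
    HasFPowerSeriesOnBall (₂F₁ a b c : 𝕂 → 𝕂) (ordinaryHypergeometricSeries 𝕂 a b c) 0 1 :=
  have h := one_le_ordinaryHypergeometricSeries_radius 𝕂 a b c
  (FormalMultilinearSeries.hasFPowerSeriesOnBall _ (one_pos.trans_le h)).mono one_pos h

theorem hasSum_ordinaryHypergeometric (a b c : 𝕂) {x : 𝕂} (hx : ‖x‖ < 1) :
    HasSum (fun n : ℕ => ordinaryHypergeometricCoefficient a b c n * x ^ n) (₂F₁ a b c x) := by
  have h := (hasFPowerSeriesOnBall_ordinaryHypergeometric a b c).hasSum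
    (mem_eball_zero_one_iff.2 hx)
  simpa only [zero_add, ordinaryHypergeometricSeries_apply_eq, smul_eq_mul] using h

theorem hasDerivAt_ordinaryHypergeometric (a b c : 𝕂) {x : 𝕂} (hx : ‖x‖ < 1) :
    HasDerivAt (₂F₁ a b c) (a * b / c * ₂F₁ (a + 1) (b + 1) (c + 1) x) x := by
  have hF := hasFPowerSeriesOnBall_ordinaryHypergeometric a b c
  have hmem := mem_eball_zero_one_iff.2 hx
  have hderiv : HasSum
      (fun n : ℕ => (n + 1) * ordinaryHypergeometricCoefficient a b c (n + 1) * x ^ n)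
      (deriv (₂F₁ a b c) x) := by
    have h := (ContinuousLinearMap.apply 𝕂 𝕂 (1 : 𝕂)).hasSum (hF.fderiv.hasSum hmem)
    simpa [FormalMultilinearSeries.apply_eq_pow_smul_coeff, ordinaryHypergeometricSeries,
      FormalMultilinearSeries.derivSeries_coeff_one, mul_comm (x ^ _)] using h
  simp only [succ_mul_ordinaryHypergeometricCoefficient_succ, mul_assoc (a * b / c)] at hderiv
  rw [((hasSum_ordinaryHypergeometric (a + 1) (b + 1) (c + 1) hx).mul_left _).unique hderiv]
  exact (hF.analyticOnNhd x hmem).differentiableAt.hasDerivAt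

theorem iteratedDeriv_ordinaryHypergeometric (a b c : 𝕂) (n : ℕ) {x : 𝕂} (hx : ‖x‖ < 1) :
    iteratedDeriv n (₂F₁ a b c) x =
      (ascPochhammer 𝕂 n).eval a * (ascPochhammer 𝕂 n).eval b / (ascPochhammer 𝕂 n).eval c *
        ₂F₁ (a + n) (b + n) (c + n) x := by
  induction n generalizing x with
  | zero => simp
  | succ n ih =>
    have hev : iteratedDeriv n (₂F₁ a b c) =ᶠ[𝓝 x] fun y => _ :=
      (continuous_norm.continuousAt.eventually_lt_const hx).mono fun y hy => ih hy
    rw [iteratedDeriv_succ, hev.deriv_eq,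
      ((hasDerivAt_ordinaryHypergeometric (a + n) (b + n) (c + n) hx).const_mul _).deriv]
    simp only [ascPochhammer_succ_eval, Nat.cast_add_one, add_assoc]
    rw [← mul_assoc, div_mul_div_comm, mul_mul_mul_comm]

end Series

theorem hasSum_ascPochhammer_div_factorial (a : ℝ) {x : ℝ} (hx : |x| < 1) :
    HasSum (fun n : ℕ => (ascPochhammer ℝ n).eval a / n ! * x ^ n) ((1 - x) ^ (-a)) := by
  convert! (Real.one_div_one_sub_rpow_hasFPowerSeriesOnBall_zero a).hasSum
    (mem_eball_zero_one_iff.2 hx) using 1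
  · funext n
    have hn : (n ! : ℝ) * Ring.choose (a + n - 1) n = (ascPochhammer ℝ n).eval a := by
      rw [← Ring.multichoose_eq, ← nsmul_eq_mul, Ring.factorial_nsmul_multichoose_eq_ascPochhammer,
        ascPochhammer_smeval_eq_eval]
    rw [FormalMultilinearSeries.ofScalars_apply_eq, smul_eq_mul, ← hn,
      mul_div_cancel_left₀ _ (by positivity)]
  · rw [zero_add, one_div, Real.rpow_neg (by linarith [(abs_lt.mp hx).2])]

theorem ne_neg_natCast_of_pos {s : ℝ} (hs : 0 < s) (k : ℕ) : s ≠ -k :=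
  ((neg_nonpos.2 k.cast_nonneg).trans_lt hs).ne'

theorem gamma_add_natCast {s : ℝ} (hs : ∀ k : ℕ, s ≠ -k) (n : ℕ) :
    Gamma (s + n) = (ascPochhammer ℝ n).eval s * Gamma s := by
  induction n with
  | zero => simp
  | succ n ih =>
    rw [Nat.cast_add_one, ← add_assoc,
      Real.Gamma_add_one fun h => hs n (eq_neg_of_add_eq_zero_left h), ih, ascPochhammer_succ_eval]
    ring

theorem beta_add_natCast_left {u v : ℝ} (hu : ∀ k : ℕ, u ≠ -k) (huv : ∀ k : ℕ, u + v ≠ -k)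
    (n : ℕ) :
    beta (u + n) v =
      beta u v * ((ascPochhammer ℝ n).eval u / (ascPochhammer ℝ n).eval (u + v)) := by
  rw [beta, beta, add_right_comm, gamma_add_natCast hu, gamma_add_natCast huv, div_mul_div_comm]
  congr 1 <;> ring

theorem integrableOn_rpow_mul_one_sub_rpow {u v : ℝ} (hu : 0 < u) (hv : 0 < v) :
    IntegrableOn (fun t : ℝ => t ^ (u - 1) * (1 - t) ^ (v - 1)) (Ioo 0 1) := by
  have h := Complex.betaIntegral_convergent (u := u) (v := v) (by simpa) (by simpa)
  rw [intervalIntegrable_iff_integrableOn_Ioo_of_le zero_le_one] at h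
  refine IntegrableOn.congr_fun h.re (fun t ht => ?_) measurableSet_Ioo
  have hreal : (t : ℂ) ^ ((u : ℂ) - 1) * (1 - t : ℂ) ^ ((v : ℂ) - 1) =
      ((t ^ (u - 1) * (1 - t) ^ (v - 1) : ℝ) : ℂ) := by
    rw [Complex.ofReal_mul, Complex.ofReal_cpow ht.1.le, Complex.ofReal_cpow (sub_nonneg.2 ht.2.le)]
    push_cast
    rfl
  rw [hreal, RCLike.re_to_complex, Complex.ofReal_re]

theorem integral_rpow_mul_one_sub_rpow {u v : ℝ} (hu : 0 < u) (hv : 0 < v) :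
    ∫ t in Ioo (0 : ℝ) 1, t ^ (u - 1) * (1 - t) ^ (v - 1) = beta u v := by
  have hβ := beta_pos hu hv
  have h := ProbabilityTheory.lintegral_betaPDF_eq_one hu hv
  simp only [ProbabilityTheory.lintegral_betaPDF, mul_assoc] at h
  rw [← ofReal_integral_eq_lintegral_ofReal
    ((integrableOn_rpow_mul_one_sub_rpow hu hv).const_mul _), ENNReal.ofReal_eq_one,
    integral_const_mul, one_div, inv_mul_eq_one₀ hβ.ne'] at h
  · exact h.symm
  · filter_upwards [ae_restrict_mem measurableSet_Ioo] with t ⟨h0, h1⟩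
    have : 0 < 1 - t := sub_pos.2 h1
    simp only [Pi.zero_apply]
    positivity

theorem hasSum_rpow_add_natCast (a b : ℝ) {x t : ℝ} (ht : 0 < t) (hxt : |x * t| < 1) :
    HasSum (fun n : ℕ => (ascPochhammer ℝ n).eval a / n ! * x ^ n * t ^ (b + n - 1))
      (t ^ (b - 1) * (1 - x * t) ^ (-a)) := by
  convert! (hasSum_ascPochhammer_div_factorial a hxt).mul_left (t ^ (b - 1)) using 2 with n
  rw [add_sub_right_comm, Real.rpow_add_natCast ht.ne', mul_pow]
  ring

theorem euler_integral_ordinaryHypergeometric (a : ℝ) {b c x : ℝ} (hb : 0 < b) (hbc : b < c)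
    (hx : |x| < 1) :
    ∫ t in Ioo (0 : ℝ) 1, t ^ (b - 1) * (1 - t) ^ (c - b - 1) * (1 - x * t) ^ (-a) =
      beta b (c - b) * ₂F₁ a b c x := by
  let F (n : ℕ) (t : ℝ) : ℝ :=
    (ascPochhammer ℝ n).eval a / n ! * x ^ n * (t ^ (b + n - 1) * (1 - t) ^ (c - b - 1))
  have hbn (n : ℕ) : 0 < b + n := by positivity
  have hcb : 0 < c - b := sub_pos.2 hbc
  have hF_integral (n : ℕ) : ∫ t in Ioo (0 : ℝ) 1, F n t =
      beta b (c - b) * (ordinaryHypergeometricCoefficient a b c n * x ^ n) := by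
    rw [integral_const_mul, integral_rpow_mul_one_sub_rpow (hbn n) hcb,
      beta_add_natCast_left (ne_neg_natCast_of_pos hb) (ne_neg_natCast_of_pos (by linarith)),
      add_sub_cancel]
    ring
  have hF_norm (n : ℕ) : ∫ t in Ioo (0 : ℝ) 1, ‖F n t‖ = ‖∫ t in Ioo (0 : ℝ) 1, F n t‖ := by
    rw [integral_const_mul, norm_mul, integral_rpow_mul_one_sub_rpow (hbn n) hcb,
      Real.norm_of_nonneg (beta_pos (hbn n) hcb).le,
      ← integral_rpow_mul_one_sub_rpow (hbn n) hcb, ← integral_const_mul]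
    refine setIntegral_congr_fun measurableSet_Ioo fun t ⟨h0, h1⟩ => ?_
    simp only [F, norm_mul, Real.norm_of_nonneg (Real.rpow_nonneg h0.le _),
      Real.norm_of_nonneg (Real.rpow_nonneg (sub_nonneg.2 h1.le) _)]
  have hF_tsum : ∀ t ∈ Ioo (0 : ℝ) 1,
      ∑' n, F n t = t ^ (b - 1) * (1 - t) ^ (c - b - 1) * (1 - x * t) ^ (-a) := by
    intro t ⟨h0, h1⟩
    have hxt : |x * t| < 1 := by
      rw [abs_mul, abs_of_pos h0]
      exact mul_lt_one_of_nonneg_of_lt_one_left (abs_nonneg x) hx h1.le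
    simp only [F, ← mul_assoc]
    rw [mul_right_comm]
    exact ((hasSum_rpow_add_natCast a b h0 hxt).mul_right _).tsum_eq
  have hseries := (hasSum_ordinaryHypergeometric a b c hx).mul_left (beta b (c - b))
  have hsum := hasSum_integral_of_summable_integral_norm (μ := volume.restrict (Ioo 0 1)) (F := F)
    (fun n => (integrableOn_rpow_mul_one_sub_rpow (hbn n) hcb).const_mul _)
    (by simpa only [hF_norm, hF_integral] using hseries.summable.norm)
  rw [← setIntegral_congr_fun measurableSet_Ioo hF_tsum]
  simp only [hF_integral] at hsum
  exact hsum.unique hseries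

theorem bijOn_two_mul_div_one_add :
    BijOn (fun u : ℝ => 2 * u / (1 + u)) (Ioo 0 1) (Ioo 0 1) := by
  refine BijOn.mk (fun u ⟨h0, h1⟩ => ?_) (fun u ⟨hu, _⟩ v ⟨hv, _⟩ huv => ?_)
    fun t ⟨h0, h1⟩ => ⟨t / (2 - t), ?_, ?_⟩
  · have : 0 < 1 + u := by linarith
    exact ⟨by positivity, by rw [div_lt_one this]; linarith⟩
  · field_simp at huv
    linarith
  · have : 0 < 2 - t := by linarith
    exact ⟨by positivity, by rw [div_lt_one this]; linarith⟩
  · have : 2 - t ≠ 0 := by linarith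
    dsimp only
    field_simp
    ring

section ChangeOfVariables

variable {E : Type*} [NormedAddCommGroup E] [NormedSpace ℝ E]

theorem setIntegral_comp_two_mul_div_one_add (f : ℝ → E) :
    ∫ u in Ioo (0 : ℝ) 1, (2 / (1 + u) ^ 2) • f (2 * u / (1 + u)) = ∫ t in Ioo (0 : ℝ) 1, f t := by
  have hderiv : ∀ u ∈ Ioo (0 : ℝ) 1,
      HasDerivWithinAt (fun u : ℝ => 2 * u / (1 + u)) (2 / (1 + u) ^ 2) (Ioo 0 1) u := by
    intro u ⟨hu, _⟩
    have hne : 1 + u ≠ 0 := by positivity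
    convert! (((hasDerivAt_id' u).const_mul 2).div ((hasDerivAt_id' u).const_add 1)
      hne).hasDerivWithinAt using 1
    ring
  have h := integral_image_eq_integral_abs_deriv_smul measurableSet_Ioo hderiv
    bijOn_two_mul_div_one_add.injOn f
  rw [bijOn_two_mul_div_one_add.image_eq] at h
  rw [h]
  exact setIntegral_congr_fun measurableSet_Ioo fun u _ => by
    simp only [abs_of_nonneg (show 0 ≤ 2 / (1 + u) ^ 2 by positivity)]

theorem setIntegral_comp_sq (f : ℝ → E) :
    ∫ u in Ioo (0 : ℝ) 1, (2 * u) • f (u ^ 2) = ∫ v in Ioo (0 : ℝ) 1, f v := by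
  have hbij : BijOn (fun u : ℝ => u ^ 2) (Ioo 0 1) (Ioo 0 1) :=
    BijOn.mk (fun u ⟨h0, h1⟩ => ⟨by positivity, pow_lt_one₀ h0.le h1 two_ne_zero⟩)
      (fun u hu v hv => (pow_left_inj₀ hu.1.le hv.1.le two_ne_zero).1) fun v ⟨h0, h1⟩ =>
      ⟨√v, ⟨Real.sqrt_pos.2 h0, by rwa [Real.sqrt_lt' one_pos, one_pow]⟩, Real.sq_sqrt h0.le⟩
  have h := integral_image_eq_integral_abs_deriv_smul measurableSet_Ioo
    (fun u _ => by simpa using (hasDerivAt_pow 2 u).hasDerivWithinAt) hbij.injOn f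
  rw [hbij.image_eq] at h
  rw [h]
  exact setIntegral_congr_fun measurableSet_Ioo fun u hu => by
    simp only [abs_of_pos (show 0 < 2 * u from mul_pos two_pos hu.1)]

end ChangeOfVariables

theorem integral_rpow_mul_one_sub_sq_rpow {s d : ℝ} (hs : 0 < s) (hd : 0 < d) :
    ∫ u in Ioo (0 : ℝ) 1, u ^ (s - 1) * (1 - u ^ 2) ^ (d - 1) = beta (s / 2) d / 2 := by
  rw [← integral_rpow_mul_one_sub_rpow (half_pos hs) hd,
    ← setIntegral_comp_sq fun v => v ^ (s / 2 - 1) * (1 - v) ^ (d - 1), ← integral_div]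
  refine setIntegral_congr_fun measurableSet_Ioo fun u ⟨hu, _⟩ => ?_
  have hpow : u ^ (s - 1) = (u ^ 2) ^ (s / 2 - 1) * u := by
    rw [← Real.rpow_natCast_mul hu.le, ← Real.rpow_add_one hu.ne']
    push_cast
    ring_nf
  simp only [hpow, smul_eq_mul]
  ring

theorem euler_integrand_comp_two_mul_div_one_add (b d : ℝ) {u : ℝ} (hu : u ∈ Ioo (0 : ℝ) 1) :
    2 / (1 + u) ^ 2 * ((2 * u / (1 + u)) ^ (b - 1) * (1 - 2 * u / (1 + u)) ^ (d - 1) *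
        (1 - 1 / 2 * (2 * u / (1 + u))) ^ (-(b + 2 * d - 1))) =
      2 ^ b * (u ^ (b - 1) * (1 - u ^ 2) ^ (d - 1)) := by
  obtain ⟨h0, h1⟩ := hu
  have hadd : 0 < 1 + u := by linarith
  have hsub : 0 ≤ 1 - u := by linarith
  have hone_sub : 1 - 2 * u / (1 + u) = (1 - u) / (1 + u) := by field_simp; ring
  have hone_sub_half : 1 - 1 / 2 * (2 * u / (1 + u)) = (1 + u)⁻¹ := by field_simp; ring
  have hsq : 1 - u ^ 2 = (1 - u) * (1 + u) := by ring
  have hexp : (1 + u) ^ (b + 2 * d - 1) =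
      (1 + u) ^ 2 * (1 + u) ^ (b - 1) * ((1 + u) ^ (d - 1) * (1 + u) ^ (d - 1)) := by
    rw [← Real.rpow_natCast, ← Real.rpow_add hadd, ← Real.rpow_add hadd, ← Real.rpow_add hadd]
    push_cast
    ring_nf
  rw [hone_sub, hone_sub_half, hsq, Real.inv_rpow hadd.le, Real.rpow_neg hadd.le, inv_inv, hexp,
    Real.div_rpow (by positivity) hadd.le, Real.mul_rpow two_pos.le h0.le,
    Real.div_rpow hsub hadd.le, Real.mul_rpow hsub hadd.le, Real.rpow_sub_one two_ne_zero]
  field_simp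

theorem integral_euler_integrand_half {b d : ℝ} (hb : 0 < b) (hd : 0 < d) :
    ∫ t in Ioo (0 : ℝ) 1, t ^ (b - 1) * (1 - t) ^ (d - 1) * (1 - 1 / 2 * t) ^ (-(b + 2 * d - 1)) =
      2 ^ (b - 1) * beta (b / 2) d := by
  rw [← setIntegral_comp_two_mul_div_one_add]
  simp only [smul_eq_mul]
  rw [setIntegral_congr_fun measurableSet_Ioo fun u hu =>
      euler_integrand_comp_two_mul_div_one_add b d hu, integral_const_mul,
    integral_rpow_mul_one_sub_sq_rpow hb hd, Real.rpow_sub_one two_ne_zero]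
  ring

theorem gauss_second_summation {a b : ℝ} (hb : 0 < b) (hba : b < a + 1) :
    ₂F₁ a b ((a + b + 1) / 2) (1 / 2 : ℝ) =
      √π * Gamma ((a + b + 1) / 2) / (Gamma ((a + 1) / 2) * Gamma ((b + 1) / 2)) := by
  obtain ⟨d, hd, rfl⟩ : ∃ d, 0 < d ∧ a = b + 2 * d - 1 :=
    ⟨(a + 1 - b) / 2, by linarith, by ring⟩
  have hc : (b + 2 * d - 1 + b + 1) / 2 = b + d := by ring
  have ha : (b + 2 * d - 1 + 1) / 2 = b / 2 + d := by ring
  have heuler := euler_integral_ordinaryHypergeometric (b + 2 * d - 1) (x := 1 / 2) hb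
    (lt_add_of_pos_right b hd) (by norm_num [abs_of_pos])
  rw [add_sub_cancel_left, integral_euler_integrand_half hb hd, beta, beta] at heuler
  have hduplication : Gamma (b / 2) * Gamma ((b + 1) / 2) * 2 ^ (b - 1) = Gamma b * √π := by
    rw [add_div, Real.Gamma_mul_Gamma_add_half, mul_div_cancel₀ b two_ne_zero, mul_right_comm,
      mul_assoc _ _ ((2 : ℝ) ^ _), ← Real.rpow_add two_pos]
    simp
  have hΓb := Real.Gamma_pos_of_pos hb
  have hΓd := Real.Gamma_pos_of_pos hd
  have hΓa : 0 < Gamma (b / 2 + d) := Real.Gamma_pos_of_pos (by positivity)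
  have hΓb' : 0 < Gamma ((b + 1) / 2) := Real.Gamma_pos_of_pos (by positivity)
  have hΓc : 0 < Gamma (b + d) := Real.Gamma_pos_of_pos (by positivity)
  rw [mul_div_assoc', div_mul_eq_mul_div, div_eq_div_iff hΓa.ne' hΓc.ne'] at heuler
  rw [hc, ha, eq_div_iff (by positivity)]
  refine mul_left_cancel₀ (mul_pos hΓb hΓd).ne' ?_
  linear_combination -Gamma ((b + 1) / 2) * heuler + Gamma d * Gamma (b + d) * hduplication

theorem iteratedDeriv_ordinaryHypergeometric_half {a b : ℝ} (hb : 0 < b) (hba : b < a + 1)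
    (n : ℕ) :
    iteratedDeriv n (₂F₁ a b ((a + b + 1) / 2)) (1 / 2 : ℝ) =
      (ascPochhammer ℝ n).eval a * (ascPochhammer ℝ n).eval b *
        (√π * Gamma ((a + b + 1) / 2) / (Gamma ((a + n + 1) / 2) * Gamma ((b + n + 1) / 2))) := by
  have hc : 0 < (a + b + 1) / 2 := by linarith
  have hcn : (a + b + 1) / 2 + n = ((a + n) + (b + n) + 1) / 2 := by ring
  have hpoch := (ascPochhammer_pos n _ hc).ne'
  rw [iteratedDeriv_ordinaryHypergeometric a b _ n (by norm_num), hcn,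
    gauss_second_summation (by positivity) (by linarith), ← hcn,
    gamma_add_natCast (ne_neg_natCast_of_pos hc)]
  field_simp

theorem iteratedDeriv_z_at_half (n : ℕ) :
    iteratedDeriv n (₂F₁ (1 / 2 : ℝ) (1 / 2) 1) (1 / 2 : ℝ) =
      (ascPochhammer ℝ n).eval (1 / 2) ^ 2 * √π / Gamma (n / 2 + 3 / 4) ^ 2 := by
  have h := iteratedDeriv_ordinaryHypergeometric_half (a := 1 / 2) (b := 1 / 2) (by norm_num)
    (by norm_num) n
  rw [show ((1 / 2 : ℝ) + 1 / 2 + 1) / 2 = 1 by norm_num, Real.Gamma_one,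
    show ((1 / 2 : ℝ) + n + 1) / 2 = n / 2 + 3 / 4 by ring] at h
  rw [h]
  ring

theorem gamma_one_quarter_mul_gamma_three_quarters : Gamma (1 / 4) * Gamma (3 / 4) = √2 * π := by
  have h := Real.Gamma_mul_Gamma_one_sub (1 / 4)
  rw [show (1 : ℝ) - 1 / 4 = 3 / 4 by norm_num, mul_one_div, Real.sin_pi_div_four] at h
  rw [h, div_div_eq_mul_div, div_eq_iff (by positivity)]
  linear_combination -π * Real.mul_self_sqrt (zero_le_two : (0 : ℝ) ≤ 2)

theorem sqrt_pi_div_gamma_three_quarters_sq :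
    √π / Gamma (3 / 4) ^ 2 = 1 / 2 * (Gamma (1 / 4) ^ 2 / π ^ ((3 : ℝ) / 2)) := by
  have hpow : π ^ ((3 : ℝ) / 2) = π * √π := by
    rw [Real.sqrt_eq_rpow, ← Real.rpow_one_add' Real.pi_nonneg] <;> norm_num
  have hsqrt : √π ^ 2 = π := Real.sq_sqrt Real.pi_nonneg
  have hreflection : Gamma (1 / 4) ^ 2 * Gamma (3 / 4) ^ 2 = 2 * π ^ 2 := by
    rw [← mul_pow, gamma_one_quarter_mul_gamma_three_quarters, mul_pow, Real.sq_sqrt zero_le_two]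
  have hΓ : Gamma (3 / 4) ≠ 0 := (Real.Gamma_pos_of_pos (by norm_num)).ne'
  rw [hpow]
  field_simp
  linear_combination 2 * π * hsqrt - hreflection

theorem iteratedDeriv_two_mul_z_at_half (m : ℕ) :
    iteratedDeriv (2 * m) (₂F₁ (1 / 2 : ℝ) (1 / 2) 1) (1 / 2 : ℝ) =
      1 / 2 * ((ascPochhammer ℝ (2 * m)).eval (1 / 2) / (ascPochhammer ℝ m).eval (3 / 4)) ^ 2 *
        (Gamma (1 / 4) ^ 2 / π ^ ((3 : ℝ) / 2)) := by
  have hΓ : Gamma ((2 * m : ℕ) / 2 + 3 / 4) =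
      (ascPochhammer ℝ m).eval (3 / 4) * Gamma (3 / 4) := by
    rw [← gamma_add_natCast (ne_neg_natCast_of_pos (by norm_num))]
    push_cast
    ring_nf
  rw [iteratedDeriv_z_at_half, hΓ, mul_pow, mul_div_mul_comm, sqrt_pi_div_gamma_three_quarters_sq]
  ring

theorem iteratedDeriv_two_mul_sub_one_z_at_half {m : ℕ} (hm : 1 ≤ m) :
    iteratedDeriv (2 * m - 1) (₂F₁ (1 / 2 : ℝ) (1 / 2) 1) (1 / 2 : ℝ) =
      ((ascPochhammer ℝ (2 * m - 1)).eval (1 / 2) / (ascPochhammer ℝ m).eval (1 / 4)) ^ 2 *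
        (√π / Gamma (1 / 4) ^ 2) := by
  have hΓ : Gamma ((2 * m - 1 : ℕ) / 2 + 3 / 4) =
      (ascPochhammer ℝ m).eval (1 / 4) * Gamma (1 / 4) := by
    rw [← gamma_add_natCast (ne_neg_natCast_of_pos (by norm_num)), Nat.cast_sub (by lia)]
    push_cast
    ring_nf
  rw [iteratedDeriv_z_at_half, hΓ, mul_pow, mul_div_mul_comm, div_pow]

theorem poch_eq_ascPochhammer_eval (a : ℝ) (n : ℕ) : poch a n = (ascPochhammer ℝ n).eval a := by
  induction n with
  | zero => simp [poch]
  | succ n ih => rw [ascPochhammer_succ_eval, ← ih, poch, Finset.prod_range_succ, poch]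

theorem hypF_eq_ordinaryHypergeometric (a b c : ℝ) : hypF a b c = ₂F₁ a b c := by
  rw [ordinaryHypergeometric_eq_tsum]
  funext x
  refine tsum_congr fun n => ?_
  rw [poch_eq_ascPochhammer_eval, poch_eq_ascPochhammer_eval, poch_eq_ascPochhammer_eval,
    smul_eq_mul]
  ring

theorem derivs_of_z_at_half_rational_multiples (m : ℕ) (hm : 1 ≤ m) :
    (∃ q : ℚ, iteratedDeriv (2 * m) (fun t => hypF (1/2) (1/2) 1 t) (1/2)
        = (q : ℝ) * (Real.Gamma (1/4) ^ 2 / Real.pi ^ ((3 : ℝ)/2))) ∧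
    (∃ q : ℚ, iteratedDeriv (2 * m - 1) (fun t => hypF (1/2) (1/2) 1 t) (1/2)
        = (q : ℝ) * (Real.sqrt Real.pi / Real.Gamma (1/4) ^ 2)) := by
  rw [hypF_eq_ordinaryHypergeometric, iteratedDeriv_two_mul_z_at_half,
    iteratedDeriv_two_mul_sub_one_z_at_half hm]
  constructor
  · use 1 / 2 * ((ascPochhammer ℚ (2 * m)).eval (1 / 2) / (ascPochhammer ℚ m).eval (3 / 4)) ^ 2
    push_cast [ratCast_ascPochhammer_eval]
    rfl
  · use ((ascPochhammer ℚ (2 * m - 1)).eval (1 / 2) / (ascPochhammer ℚ m).eval (1 / 4)) ^ 2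
    push_cast [ratCast_ascPochhammer_eval]
    rfl
end

section
/- z(1/2) = Γ(1/4)^2 / (2π^{3/2}) and z'(1/2) = 4√π / Γ(1/4)^2, where z(x) = ₂F₁(1/2, 1/2; 1; x). -/
/-!
Expanding `(1 - x sin² t) ^ (-a)` by the binomial series and integrating termwise with Wallis'
formula gives `₂F₁(a, 1/2; 1; x) = π⁻¹ ∫₀^π (1 - x sin² t) ^ (-a) dt`, which may be differentiated
under the integral sign. At `x = 1/2` we have `1 - sin² t / 2 = (1 + cos² t) / 2`, so that
`z(1/2)` is a multiple of `∫₀^π (1 + cos² t) ^ (-1/2) dt` and, after an integration by parts,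
`z'(1/2)` is a multiple of `∫₀^π cos² t (1 + cos² t) ^ (-1/2) dt`. Both are beta integrals in
the variable `u = cos⁴ t`, because `1 - cos⁴ t = sin² t (1 + cos² t)`; the reflection formula
removes the remaining `Γ(3/4)`.
-/

open MeasureTheory ProbabilityTheory Real Set Topology

theorem hasDerivAt_intervalIntegral_of_continuousOn {E : Type*} [NormedAddCommGroup E]
    [NormedSpace ℝ E] {F F' : ℝ → ℝ → E} {U : Set ℝ} {x₀ a b : ℝ} (hU : U ∈ 𝓝 x₀)
    (hF : ∀ x ∈ U, ContinuousOn (F x) (uIcc a b))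
    (hF' : ContinuousOn (Function.uncurry F') (U ×ˢ uIcc a b))
    (hderiv : ∀ x ∈ U, ∀ t ∈ uIcc a b, HasDerivAt (F · t) (F' x t) x) :
    HasDerivAt (fun x ↦ ∫ t in a..b, F x t) (∫ t in a..b, F' x₀ t) x₀ := by
  obtain ⟨ε, hε, hεU⟩ := Metric.nhds_basis_closedBall.mem_iff.1 hU
  obtain ⟨C, hC⟩ := ((isCompact_closedBall x₀ ε).prod isCompact_uIcc).exists_bound_of_continuousOn
    (hF'.mono (prod_mono_left hεU))
  have hF'₀ : ContinuousOn (F' x₀) (uIcc a b) :=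
    hF'.comp (f := fun t ↦ (x₀, t)) (by fun_prop) fun t ht ↦ ⟨mem_of_mem_nhds hU, ht⟩
  have aestronglyMeasurable {f : ℝ → E} (hf : ContinuousOn f (uIcc a b)) :
      AEStronglyMeasurable f (volume.restrict (uIoc a b)) :=
    (hf.mono uIoc_subset_uIcc).aestronglyMeasurable measurableSet_uIoc
  refine (intervalIntegral.hasDerivAt_integral_of_dominated_loc_of_deriv_le
    (Metric.closedBall_mem_nhds x₀ hε) ?_ (hF x₀ (mem_of_mem_nhds hU)).intervalIntegrable
    (aestronglyMeasurable hF'₀) (bound := fun _ ↦ C) (.of_forall fun t ht x hx ↦ ?_)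
    intervalIntegrable_const (.of_forall fun t ht x hx ↦ ?_)).2
  · filter_upwards [hU] with x hx using aestronglyMeasurable (hF x hx)
  · exact hC (x, t) ⟨hx, uIoc_subset_uIcc ht⟩
  · exact hderiv x (hεU hx) t (uIoc_subset_uIcc ht)

theorem intervalIntegral_two_mul_of_symmetric {E : Type*} [NormedAddCommGroup E] [NormedSpace ℝ E]
    {f : ℝ → E} {c : ℝ} (hf : IntervalIntegrable f volume 0 c) (hsymm : ∀ t, f (2 * c - t) = f t) :
    ∫ t in 0..2 * c, f t = (2 : ℝ) • ∫ t in 0..c, f t := by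
  have hc : 2 * c - c = c := by ring
  have hf_right : IntervalIntegrable f volume c (2 * c) := by
    simpa only [hsymm, sub_zero, hc] using (hf.comp_sub_left (2 * c)).symm
  have hint_right : ∫ t in c..2 * c, f t = ∫ t in 0..c, f t := by
    simpa only [hsymm, sub_zero, hc] using
      (intervalIntegral.integral_comp_sub_left f (2 * c) (a := 0) (b := c)).symm
  rw [← intervalIntegral.integral_add_adjacent_intervals hf hf_right, hint_right, two_smul]

theorem poch_eq_ascPochhammer_smeval (a : ℝ) (n : ℕ) :
    poch a n = (ascPochhammer ℕ n).smeval a := by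
  rw [Polynomial.ascPochhammer_smeval_eq_eval, poch]
  induction n with
  | zero => simp
  | succ k ih => rw [Finset.prod_range_succ, ih, ascPochhammer_succ_eval]

theorem choose_add_sub_one_eq_poch_div_factorial (a : ℝ) (n : ℕ) :
    Ring.choose (a + n - 1) n = poch a n / n.factorial := by
  rw [← Ring.multichoose_eq, poch_eq_ascPochhammer_smeval,
    ← Ring.factorial_nsmul_multichoose_eq_ascPochhammer, nsmul_eq_mul]
  field_simp

theorem hasSum_poch_div_factorial_mul_pow (a : ℝ) {y : ℝ} (hy : |y| < 1) :
    HasSum (fun n : ℕ ↦ poch a n / n.factorial * y ^ n) ((1 - y) ^ (-a)) := by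
  have h := (one_div_one_sub_rpow_hasFPowerSeriesOnBall_zero a).hasSum (y := y)
    (by simpa [Metric.mem_eball, edist_dist, ENNReal.ofReal_lt_one] using hy)
  rw [zero_add, one_div, ← rpow_neg (by linarith [(abs_lt.1 hy).2])] at h
  simpa only [FormalMultilinearSeries.ofScalars_apply_eq,
    choose_add_sub_one_eq_poch_div_factorial, smul_eq_mul] using h

theorem integral_sin_pow_even_eq_poch (n : ℕ) :
    ∫ t in 0..π, sin t ^ (2 * n) = π * (poch (1/2) n / poch 1 n) := by
  rw [integral_sin_pow_even, poch, poch, ← Finset.prod_div_distrib]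
  congr 1
  refine Finset.prod_congr rfl fun i _ ↦ ?_
  field_simp
  ring

theorem abs_mul_sin_sq_le (x t : ℝ) : |x * sin t ^ 2| ≤ |x| := by
  rw [abs_mul, abs_of_nonneg (sq_nonneg (sin t))]
  exact mul_le_of_le_one_right (abs_nonneg x) (sin_sq_le_one t)

theorem hypF_half_one_eq_integral_sin (a : ℝ) {x : ℝ} (hx : |x| < 1) :
    hypF a (1/2) 1 x = π⁻¹ * ∫ t in 0..π, (1 - x * sin t ^ 2) ^ (-a) := by
  have hsum : HasSum (fun n : ℕ ↦ ∫ t in 0..π, poch a n / n.factorial * (x * sin t ^ 2) ^ n)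
      (∫ t in 0..π, (1 - x * sin t ^ 2) ^ (-a)) := by
    refine intervalIntegral.hasSum_integral_of_dominated_convergence
      (fun n _ ↦ |poch a n / n.factorial * x ^ n|)
      (fun n ↦ (by fun_prop : Continuous _).aestronglyMeasurable)
      (fun n ↦ .of_forall fun t _ ↦ ?_)
      (.of_forall fun _ _ ↦ (hasSum_poch_div_factorial_mul_pow a hx).summable.abs)
      intervalIntegrable_const
      (.of_forall fun t _ ↦
        hasSum_poch_div_factorial_mul_pow a ((abs_mul_sin_sq_le x t).trans_lt hx))
    rw [norm_eq_abs, abs_mul, abs_mul _ (x ^ n), abs_pow, abs_pow x]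
    exact mul_le_mul_of_nonneg_left
      (pow_le_pow_left₀ (abs_nonneg _) (abs_mul_sin_sq_le x t) n) (abs_nonneg _)
  rw [← hsum.tsum_eq, ← tsum_mul_left, hypF]
  refine tsum_congr fun n ↦ ?_
  simp only [mul_pow, ← pow_mul, intervalIntegral.integral_const_mul,
    integral_sin_pow_even_eq_poch]
  field_simp

theorem one_sub_mul_sin_sq_pos {x : ℝ} (hx : x < 1) (t : ℝ) : 0 < 1 - x * sin t ^ 2 := by
  rcases le_or_gt x 0 with hx₀ | hx₀ <;> nlinarith [sin_sq_le_one t, sq_nonneg (sin t)]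

theorem hasDerivAt_integral_one_sub_mul_sin_sq_rpow (s : ℝ) {x : ℝ} (hx : x < 1) (a b : ℝ) :
    HasDerivAt (fun y ↦ ∫ t in a..b, (1 - y * sin t ^ 2) ^ s)
      (∫ t in a..b, -sin t ^ 2 * s * (1 - x * sin t ^ 2) ^ (s - 1)) x := by
  refine hasDerivAt_intervalIntegral_of_continuousOn (U := Iio 1) (Iio_mem_nhds hx)
    (F' := fun y t ↦ -sin t ^ 2 * s * (1 - y * sin t ^ 2) ^ (s - 1))
    (fun y hy ↦ ?_) ?_ (fun y hy t _ ↦ ?_)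
  · exact ContinuousOn.rpow_const (by fun_prop) fun t _ ↦ .inl (one_sub_mul_sin_sq_pos hy t).ne'
  · refine ContinuousOn.mul (by fun_prop) (ContinuousOn.rpow_const (by fun_prop) ?_)
    exact fun p hp ↦ .inl (one_sub_mul_sin_sq_pos hp.1 p.2).ne'
  · have h : HasDerivAt (fun y ↦ 1 - y * sin t ^ 2) (-sin t ^ 2) y := by
      simpa using ((hasDerivAt_id y).mul_const (sin t ^ 2)).const_sub 1
    exact h.rpow_const (.inl (one_sub_mul_sin_sq_pos hy t).ne')

theorem hasDerivAt_hypF_half_one (a : ℝ) {x : ℝ} (hx : |x| < 1) :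
    HasDerivAt (hypF a (1/2) 1)
      (a / π * ∫ t in 0..π, sin t ^ 2 * (1 - x * sin t ^ 2) ^ (-a - 1)) x := by
  have hderiv := (hasDerivAt_integral_one_sub_mul_sin_sq_rpow (-a) (abs_lt.1 hx).2 0 π).const_mul
    π⁻¹
  refine (hderiv.congr_of_eventuallyEq ?_).congr_deriv ?_
  · filter_upwards [(isOpen_lt continuous_abs continuous_const).mem_nhds hx] with y hy
      using hypF_half_one_eq_integral_sin a hy
  · rw [div_eq_inv_mul, mul_assoc, ← intervalIntegral.integral_const_mul a]
    simp only [neg_mul_neg, mul_comm _ a, mul_assoc]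

theorem one_sub_half_mul_sin_sq_rpow (t s : ℝ) :
    (1 - 1/2 * sin t ^ 2) ^ s = 2 ^ (-s) * (1 + cos t ^ 2) ^ s := by
  have h : 1 - 1/2 * sin t ^ 2 = 2⁻¹ * (1 + cos t ^ 2) := by rw [sin_sq]; ring
  rw [h, mul_rpow (by norm_num) (by positivity), inv_rpow (by norm_num), rpow_neg (by norm_num)]

theorem continuous_one_add_cos_sq_rpow (s : ℝ) : Continuous fun t ↦ (1 + cos t ^ 2) ^ s :=
  Continuous.rpow_const (by fun_prop) fun t ↦ .inl (by positivity)

theorem integral_sin_sq_mul_one_add_cos_sq_rpow :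
    ∫ t in 0..π, sin t ^ 2 * (1 + cos t ^ 2) ^ (-3/2 : ℝ) =
      ∫ t in 0..π, cos t ^ 2 * (1 + cos t ^ 2) ^ (-1/2 : ℝ) := by
  have hderiv (t : ℝ) : HasDerivAt (fun t ↦ cos t * sin t * (1 + cos t ^ 2) ^ (-1/2 : ℝ))
      (cos t ^ 2 * (1 + cos t ^ 2) ^ (-1/2 : ℝ) - sin t ^ 2 * (1 + cos t ^ 2) ^ (-3/2 : ℝ)) t := by
    have hpos : 0 < 1 + cos t ^ 2 := by positivity
    have hrpow : (1 + cos t ^ 2) ^ (-1/2 : ℝ) = (1 + cos t ^ 2) ^ (-3/2 : ℝ) * (1 + cos t ^ 2) := by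
      rw [← rpow_add_one hpos.ne']; norm_num
    refine (((hasDerivAt_cos t).mul (hasDerivAt_sin t)).mul
      ((((hasDerivAt_cos t).pow 2).const_add 1).rpow_const (.inl hpos.ne'))).congr_deriv ?_
    simp only [Pi.mul_apply, Pi.pow_apply, show (-1/2 - 1 : ℝ) = -3/2 by norm_num, hrpow]
    ring
  have hcos : IntervalIntegrable (fun t ↦ cos t ^ 2 * (1 + cos t ^ 2) ^ (-1/2 : ℝ)) volume 0 π :=
    ((continuous_cos.pow 2).mul (continuous_one_add_cos_sq_rpow _)).intervalIntegrable _ _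
  have hsin : IntervalIntegrable (fun t ↦ sin t ^ 2 * (1 + cos t ^ 2) ^ (-3/2 : ℝ)) volume 0 π :=
    ((continuous_sin.pow 2).mul (continuous_one_add_cos_sq_rpow _)).intervalIntegrable _ _
  have hftc := intervalIntegral.integral_eq_sub_of_hasDerivAt (fun t _ ↦ hderiv t) (hcos.sub hsin)
  rw [intervalIntegral.integral_sub hcos hsin] at hftc
  simp only [sin_pi, sin_zero, mul_zero, zero_mul, sub_zero] at hftc
  exact (sub_eq_zero.1 hftc).symm

theorem integral_rpow_mul_one_sub_rpow_s8 {a b : ℝ} (ha : 0 < a) (hb : 0 < b) :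
    ∫ u in 0..1, u ^ (a - 1) * (1 - u) ^ (b - 1) = beta a b := by
  rw [beta_eq_betaIntegralReal a b ha hb, Complex.betaIntegral,
    ← Complex.ofReal_re (∫ _ in _.._, _), ← intervalIntegral.integral_ofReal]
  congr 1
  refine intervalIntegral.integral_congr fun u hu ↦ ?_
  rw [uIcc_of_le zero_le_one] at hu
  simp only [Complex.ofReal_mul, Complex.ofReal_cpow hu.1, Complex.ofReal_cpow (sub_nonneg.2 hu.2),
    Complex.ofReal_sub, Complex.ofReal_one]

theorem cos_pow_four_rpow_mul_one_sub_rpow_mul_cos_pow_three_mul_sin (a b : ℝ) {t : ℝ}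
    (hcos : 0 < cos t) (hsin : 0 < sin t) :
    (cos t ^ 4) ^ (a - 1) * (1 - cos t ^ 4) ^ (b - 1) * (cos t ^ 3 * sin t) =
      cos t ^ (4 * a - 1) * sin t ^ (2 * b - 1) * (1 + cos t ^ 2) ^ (b - 1) := by
  have hfactor : 1 - cos t ^ 4 = sin t ^ 2 * (1 + cos t ^ 2) := by rw [sin_sq]; ring
  have hcos_rpow : cos t ^ (4 * a - 1) = (cos t ^ 4) ^ (a - 1) * cos t ^ 3 := by
    rw [← rpow_natCast_mul hcos.le, ← rpow_add_natCast hcos.ne']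
    push_cast
    ring_nf
  have hsin_rpow : sin t ^ (2 * b - 1) = (sin t ^ 2) ^ (b - 1) * sin t := by
    rw [← rpow_natCast_mul hsin.le, ← rpow_add_one hsin.ne']
    push_cast
    ring_nf
  rw [hfactor, mul_rpow (by positivity) (by positivity), hcos_rpow, hsin_rpow]
  ring

theorem integral_cos_rpow_mul_sin_rpow_mul_one_add_cos_sq_rpow {a b : ℝ} (ha : 0 < a)
    (hb : 0 < b) :
    ∫ t in 0..π / 2, cos t ^ (4 * a - 1) * sin t ^ (2 * b - 1) * (1 + cos t ^ 2) ^ (b - 1) =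
      beta a b / 4 := by
  have hcos {t : ℝ} (ht : t ∈ Ioo 0 (π / 2)) : 0 < cos t :=
    cos_pos_of_mem_Ioo ⟨by linarith [ht.1, pi_pos], ht.2⟩
  have hsin {t : ℝ} (ht : t ∈ Ioo 0 (π / 2)) : 0 < sin t :=
    sin_pos_of_pos_of_lt_pi ht.1 (by linarith [ht.2, pi_pos])
  have hsubst : ∫ t in 0..π / 2,
      (cos t ^ 4) ^ (a - 1) * (1 - cos t ^ 4) ^ (b - 1) * (-4 * (cos t ^ 3 * sin t)) =
        ∫ u in 1..0, u ^ (a - 1) * (1 - u) ^ (b - 1) := by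
    have h := intervalIntegral.integral_comp_mul_deriv_of_deriv_nonpos (a := 0) (b := π / 2)
      (f := fun t ↦ cos t ^ 4) (f' := fun t ↦ -4 * (cos t ^ 3 * sin t))
      (g := fun u ↦ u ^ (a - 1) * (1 - u) ^ (b - 1)) (by fun_prop)
      (fun t _ ↦ ((hasDerivAt_cos t).pow 4).congr_deriv (by push_cast; ring))
      (fun t ht ↦ by
        rw [min_eq_left pi_div_two_pos.le, max_eq_right pi_div_two_pos.le] at ht
        have := mul_pos (pow_pos (hcos ht) 3) (hsin ht)
        linarith)
    simpa [cos_zero, cos_pi_div_two] using h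
  rw [intervalIntegral.integral_symm 0 1, integral_rpow_mul_one_sub_rpow_s8 ha hb] at hsubst
  rw [eq_div_iff four_ne_zero, ← neg_inj, ← hsubst, mul_comm, ← neg_mul,
    ← intervalIntegral.integral_const_mul]
  refine intervalIntegral.integral_congr_Ioo_of_le pi_div_two_pos.le fun t ht ↦ ?_
  rw [← cos_pow_four_rpow_mul_one_sub_rpow_mul_cos_pow_three_mul_sin a b (hcos ht) (hsin ht)]
  ring

theorem integral_cos_pow_mul_one_add_cos_sq_rpow (n : ℕ) :
    ∫ t in 0..π, cos t ^ (2 * n) * (1 + cos t ^ 2) ^ (-1/2 : ℝ) =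
      √π / 2 * (Gamma ((2 * n + 1) / 4) / Gamma ((2 * n + 3) / 4)) := by
  have hcont : Continuous fun t ↦ cos t ^ (2 * n) * (1 + cos t ^ 2) ^ (-1/2 : ℝ) :=
    (continuous_cos.pow _).mul (continuous_one_add_cos_sq_rpow _)
  have hhalf := intervalIntegral_two_mul_of_symmetric (hcont.intervalIntegrable 0 (π / 2))
    fun t ↦ by rw [mul_div_cancel₀ π two_ne_zero, cos_pi_sub, neg_sq, (even_two_mul n).neg_pow]
  have hbeta := integral_cos_rpow_mul_sin_rpow_mul_one_add_cos_sq_rpow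
    (a := (2 * n + 1) / 4) (b := 1/2) (by positivity) (by norm_num)
  have hexp : 4 * ((2 * n + 1) / 4 : ℝ) - 1 = (2 * n : ℕ) := by push_cast; ring
  have hsum : (2 * n + 1) / 4 + 1/2 = ((2 * n + 3) / 4 : ℝ) := by ring
  simp only [hexp, rpow_natCast, show 2 * (1/2 : ℝ) - 1 = 0 by norm_num, rpow_zero, mul_one,
    show (1/2 : ℝ) - 1 = -1/2 by norm_num, beta, hsum, Gamma_one_half_eq] at hbeta
  rw [mul_div_cancel₀ π two_ne_zero, hbeta, smul_eq_mul] at hhalf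
  exact hhalf.trans (by ring)

theorem Gamma_three_fourths_eq : Gamma (3/4) = π * √2 / Gamma (1/4) := by
  rw [eq_div_iff (Gamma_pos_of_pos (by norm_num)).ne', mul_comm]
  have h := Gamma_mul_Gamma_one_sub (1/4)
  rw [show (1 - 1/4 : ℝ) = 3/4 by norm_num, show π * (1/4) = π / 4 by ring, sin_pi_div_four] at h
  rw [h]
  field_simp
  exact (sq_sqrt zero_le_two).symm

theorem hypF_half_one_half_eq_integral_cos (a : ℝ) :
    hypF a (1/2) 1 (1/2) = 2 ^ a / π * ∫ t in 0..π, (1 + cos t ^ 2) ^ (-a) := by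
  rw [hypF_half_one_eq_integral_sin a (by norm_num [abs_lt])]
  simp only [one_sub_half_mul_sin_sq_rpow, neg_neg, intervalIntegral.integral_const_mul]
  ring

theorem hasDerivAt_hypF_half_one_half (a : ℝ) :
    HasDerivAt (hypF a (1/2) 1)
      (a * 2 ^ (a + 1) / π * ∫ t in 0..π, sin t ^ 2 * (1 + cos t ^ 2) ^ (-a - 1)) (1/2) := by
  have hintegrand (t : ℝ) : sin t ^ 2 * (1 - 1/2 * sin t ^ 2) ^ (-a - 1) =
      2 ^ (a + 1) * (sin t ^ 2 * (1 + cos t ^ 2) ^ (-a - 1)) := by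
    rw [one_sub_half_mul_sin_sq_rpow, neg_sub, sub_neg_eq_add, add_comm 1 a, mul_left_comm]
  refine (hasDerivAt_hypF_half_one a (by norm_num [abs_lt])).congr_deriv ?_
  simp only [hintegrand, intervalIntegral.integral_const_mul]
  ring

theorem hypF_half_half_one_half :
    hypF (1/2) (1/2) 1 (1/2) = Gamma (1/4) ^ 2 / (2 * π ^ ((3 : ℝ) / 2)) := by
  have hint : ∫ t in 0..π, (1 + cos t ^ 2) ^ (-(1/2) : ℝ) =
      √π / 2 * (Gamma (1/4) / Gamma (3/4)) := by
    simpa [neg_div] using integral_cos_pow_mul_one_add_cos_sq_rpow 0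
  have hpi : π ^ ((3 : ℝ) / 2) = √π ^ 3 := by
    rw [sqrt_eq_rpow, ← rpow_mul_natCast pi_pos.le]
    norm_num
  rw [hypF_half_one_half_eq_integral_cos, hint, Gamma_three_fourths_eq, ← sqrt_eq_rpow, hpi]
  have : 0 < Gamma (1/4) := Gamma_pos_of_pos (by norm_num)
  field_simp
  rw [show √π ^ 4 = (√π ^ 2) ^ 2 by ring, sq_sqrt pi_pos.le]

theorem hasDerivAt_hypF_half_half_one_half :
    HasDerivAt (hypF (1/2) (1/2) 1) (4 * √π / Gamma (1/4) ^ 2) (1/2) := by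
  have hΓ_five_fourths : Gamma (5/4) = 1/4 * Gamma (1/4) := by
    rw [← Gamma_add_one (by norm_num)]
    norm_num
  have hint : ∫ t in 0..π, sin t ^ 2 * (1 + cos t ^ 2) ^ (-(1/2) - 1 : ℝ) =
      √π / 2 * (Gamma (3/4) / Gamma (5/4)) := by
    rw [show (-(1/2) - 1 : ℝ) = -3/2 by norm_num, integral_sin_sq_mul_one_add_cos_sq_rpow]
    convert integral_cos_pow_mul_one_add_cos_sq_rpow 1 using 4 <;> norm_num
  have htwo : (2 : ℝ) ^ (1/2 + 1 : ℝ) = √2 * 2 := by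
    rw [rpow_add_one two_ne_zero, sqrt_eq_rpow]
  refine (hasDerivAt_hypF_half_one_half (1/2)).congr_deriv ?_
  rw [hint, hΓ_five_fourths, Gamma_three_fourths_eq, htwo]
  have : 0 < Gamma (1/4) := Gamma_pos_of_pos (by norm_num)
  field_simp
  norm_num

theorem z_and_z'_at_half :
    hypF (1/2) (1/2) 1 (1/2)
        = Real.Gamma (1/4) ^ 2 / (2 * Real.pi ^ ((3 : ℝ)/2)) ∧
    deriv (fun t => hypF (1/2) (1/2) 1 t) (1/2)
        = 4 * Real.sqrt Real.pi / Real.Gamma (1/4) ^ 2 :=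
  ⟨hypF_half_half_one_half, hasDerivAt_hypF_half_half_one_half.deriv⟩
end

section
/- For any real a > 0, the integral from 0 to ∞ of x^a / (cos x + cosh x) dx satisfies ((1 - i^{a+1})/(1+i)^{a-1}) · ∫₀^∞ x^a/(cos x + cosh x) dx = 2π^{a+1} · Σ_{n=1}^∞ (-1)^{n-1} ((2n-1)/2)^a / cosh(((2n-1)/2)π). -/
open Complex Real

/-!
Let `F w = w ^ s / (cosh w * cos w)`. Since `2 * cosh w * cos w` equals
`cos ((1 + I) * w) + cosh ((1 + I) * w)`, the integral of `F` along the ray of argument `-π / 4` is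
a multiple of the wanted integral, and `F (I * w) = I ^ s * F w` makes its integral along the ray of
argument `π / 4` equal to `I ^ (s + 1)` times the same value. Between the two rays, `F` has poles
exactly at the positive zeros `(2 * n + 1) / 2 * π` of the cosine, whose residues form the series.
In the coordinate `z = log w` the sector becomes the strip `|Im z| ≤ π / 4`, which is exhausted by
rectangles whose right edges lie on the circles `‖w‖ = N * π`, where the cosine stays away
from zero.
-/

section IntegralLemmas

open MeasureTheory Set Topology Filter
open scoped Interval

variable {E : Type*} [NormedAddCommGroup E] [NormedSpace ℝ E]

theorem integrable_exp_smul_comp_exp_iff {g : ℝ → E} :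
    Integrable (fun t ↦ Real.exp t • g (Real.exp t)) ↔ IntegrableOn g (Ioi 0) := by
  rw [← Real.range_exp, ← image_univ, integrableOn_image_iff_integrableOn_abs_deriv_smul
    MeasurableSet.univ (fun t _ ↦ (Real.hasDerivAt_exp t).hasDerivWithinAt)
    Real.exp_injective.injOn, integrableOn_univ]
  simp only [Real.abs_exp]

theorem integral_exp_smul_comp_exp (g : ℝ → E) :
    ∫ t, Real.exp t • g (Real.exp t) = ∫ x in Ioi 0, g x := by
  rw [← Real.range_exp, ← image_univ, integral_image_eq_integral_abs_deriv_smul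
    MeasurableSet.univ (fun t _ ↦ (Real.hasDerivAt_exp t).hasDerivWithinAt)
    Real.exp_injective.injOn, setIntegral_univ]
  simp only [Real.abs_exp]

theorem tendsto_intervalIntegral_zero_of_norm_le {ι : Type*} {l : Filter ι} {f : ι → ℝ → E}
    {bound : ι → ℝ} {c d : ℝ} (hf : ∀ᶠ i in l, ∀ y ∈ Ι c d, ‖f i y‖ ≤ bound i)
    (hbound : Tendsto bound l (𝓝 0)) : Tendsto (fun i ↦ ∫ y in c..d, f i y) l (𝓝 0) := by
  have hlim : Tendsto (fun i ↦ bound i * |d - c|) l (𝓝 0) := by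
    simpa only [zero_mul] using hbound.mul_const |d - c|
  exact squeeze_zero_norm'
    (hf.mono fun i hi ↦ intervalIntegral.norm_integral_le_of_norm_le_const hi) hlim

end IntegralLemmas

section RectangleIntegral

open MeasureTheory Set Topology Filter
open scoped Interval

variable {E : Type*} [NormedAddCommGroup E] [NormedSpace ℂ E]

/-- The counterclockwise contour integral of `f` along the boundary of `[a, b] × [c, d]`, written as
in `Complex.integral_boundary_rect_eq_zero_of_differentiableOn`. -/
noncomputable def rectangleIntegral (f : ℂ → E) (a b c d : ℝ) : E :=
  (((∫ x : ℝ in a..b, f (x + c * I)) - ∫ x : ℝ in a..b, f (x + d * I)) +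
    I • ∫ y : ℝ in c..d, f (b + y * I)) - I • ∫ y : ℝ in c..d, f (a + y * I)

/-- The boundary of the rectangle with opposite vertices `a + c * I` and `b + d * I`, the contour of
`rectangleIntegral`. -/
def rectangleBoundary (a b c d : ℝ) : Set ℂ :=
  ([[a, b]] ×ℂ {c, d}) ∪ ({a, b} ×ℂ [[c, d]])

variable {f g : ℂ → E} {a b c d : ℝ}

theorem forall_mem_rectangleBoundary {P : ℂ → Prop} :
    (∀ ζ ∈ rectangleBoundary a b c d, P ζ) ↔
      ((∀ x ∈ [[a, b]], P (x + c * I)) ∧ ∀ x ∈ [[a, b]], P (x + d * I)) ∧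
        (∀ y ∈ [[c, d]], P (b + y * I)) ∧ ∀ y ∈ [[c, d]], P (a + y * I) := by
  constructor
  · intro h
    refine ⟨⟨fun x hx ↦ h _ (Or.inl ?_), fun x hx ↦ h _ (Or.inl ?_)⟩,
      fun y hy ↦ h _ (Or.inr ?_), fun y hy ↦ h _ (Or.inr ?_)⟩ <;>
      simp_all [mem_reProdIm]
  · rintro ⟨⟨hc, hd⟩, hb, ha⟩ ζ (⟨hre, him | him⟩ | ⟨hre | hre, him⟩) <;> rw [← re_add_im ζ]
    · exact him ▸ hc _ hre
    · exact him ▸ hd _ hre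
    · exact hre ▸ ha _ him
    · exact hre ▸ hb _ him

theorem rectangleBoundary_subset : rectangleBoundary a b c d ⊆ [[a, b]] ×ℂ [[c, d]] :=
  forall_mem_rectangleBoundary.2 (by simp +contextual [mem_reProdIm])

theorem notMem_rectangleBoundary_of_mem_Ioo {p : ℂ} (hp : p ∈ Ioo a b ×ℂ Ioo c d) :
    p ∉ rectangleBoundary a b c d := by
  obtain ⟨⟨ha, hb⟩, hc, hd⟩ := hp
  rintro (⟨-, him | him⟩ | ⟨hre | hre, -⟩)
  exacts [hc.ne' him, hd.ne him, ha.ne' hre, hb.ne hre]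

theorem rectangleIntegral_congr (h : EqOn f g (rectangleBoundary a b c d)) :
    rectangleIntegral f a b c d = rectangleIntegral g a b c d := by
  obtain ⟨⟨hc, hd⟩, hb, ha⟩ := forall_mem_rectangleBoundary.1 h
  simp only [rectangleIntegral, intervalIntegral.integral_congr hc,
    intervalIntegral.integral_congr hd, intervalIntegral.integral_congr hb,
    intervalIntegral.integral_congr ha]

theorem rectangleIntegral_add (hf : ContinuousOn f (rectangleBoundary a b c d))
    (hg : ContinuousOn g (rectangleBoundary a b c d)) :
    rectangleIntegral (fun ζ ↦ f ζ + g ζ) a b c d =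
      rectangleIntegral f a b c d + rectangleIntegral g a b c d := by
  obtain ⟨⟨hc, hd⟩, hb, ha⟩ := forall_mem_rectangleBoundary.1 fun ζ hζ ↦ hζ
  have add_edge {γ : ℝ → ℂ} {t u : ℝ} (hγ : Continuous γ)
      (hmem : ∀ x ∈ [[t, u]], γ x ∈ rectangleBoundary a b c d) :
      ∫ x in t..u, (f (γ x) + g (γ x)) = (∫ x in t..u, f (γ x)) + ∫ x in t..u, g (γ x) :=
    intervalIntegral.integral_add (hf.comp hγ.continuousOn hmem).intervalIntegrable
      (hg.comp hγ.continuousOn hmem).intervalIntegrable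
  simp only [rectangleIntegral]
  rw [add_edge (by fun_prop) hc, add_edge (by fun_prop) hd, add_edge (by fun_prop) hb,
    add_edge (by fun_prop) ha]
  module

theorem rectangleIntegral_smul_const [CompleteSpace E] (f : ℂ → ℂ) (v : E) :
    rectangleIntegral (fun ζ ↦ f ζ • v) a b c d = rectangleIntegral f a b c d • v := by
  simp only [rectangleIntegral, intervalIntegral.integral_smul_const, smul_eq_mul]
  module

theorem rectangleIntegral_add_adjacent {m : ℝ}
    (hac : IntervalIntegrable (fun x : ℝ ↦ f (x + c * I)) volume a m)
    (hbc : IntervalIntegrable (fun x : ℝ ↦ f (x + c * I)) volume m b)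
    (had : IntervalIntegrable (fun x : ℝ ↦ f (x + d * I)) volume a m)
    (hbd : IntervalIntegrable (fun x : ℝ ↦ f (x + d * I)) volume m b) :
    rectangleIntegral f a m c d + rectangleIntegral f m b c d = rectangleIntegral f a b c d := by
  simp only [rectangleIntegral, ← intervalIntegral.integral_add_adjacent_intervals hac hbc,
    ← intervalIntegral.integral_add_adjacent_intervals had hbd]
  abel

theorem smul_integral_comp_eq_sub_of_hasDerivAt [CompleteSpace E] {F : ℂ → E} {γ : ℝ → ℂ} {v : ℂ}
    {t u : ℝ} (hγ : ∀ x ∈ [[t, u]], HasDerivAt γ v x)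
    (hF : ∀ x ∈ [[t, u]], HasDerivAt F (f (γ x)) (γ x))
    (hf : ContinuousOn (fun x ↦ f (γ x)) [[t, u]]) :
    v • ∫ x in t..u, f (γ x) = F (γ u) - F (γ t) := by
  rw [← intervalIntegral.integral_smul]
  exact intervalIntegral.integral_eq_sub_of_hasDerivAt
    (fun x hx ↦ (hF x hx).scomp x (hγ x hx)) (hf.const_smul v).intervalIntegrable

theorem log_sub_log_neg_of_im_pos {z : ℂ} (hz : 0 < z.im) :
    Complex.log z - Complex.log (-z) = π * I := by
  rw [Complex.log, Complex.log, arg_neg_eq_arg_sub_pi_of_im_pos hz, norm_neg]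
  push_cast
  ring

theorem log_sub_log_neg_of_im_neg {z : ℂ} (hz : z.im < 0) :
    Complex.log z - Complex.log (-z) = -(π * I) := by
  rw [Complex.log, Complex.log, arg_neg_eq_arg_add_pi_of_im_neg hz, norm_neg]
  push_cast
  ring

theorem continuousOn_inv_sub_rectangleBoundary {p : ℂ} (hp : p ∈ Ioo a b ×ℂ Ioo c d) :
    ContinuousOn (fun ζ ↦ (ζ - p)⁻¹) (rectangleBoundary a b c d) :=
  ContinuousOn.inv₀ (by fun_prop) fun _ hζ h ↦
    notMem_rectangleBoundary_of_mem_Ioo hp (sub_eq_zero.1 h ▸ hζ)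

theorem hasDerivAt_log_sub {p ζ : ℂ} (h : ζ - p ∈ slitPlane) :
    HasDerivAt (fun ζ ↦ Complex.log (ζ - p)) (ζ - p)⁻¹ ζ := by
  simpa using ((hasDerivAt_id ζ).sub_const p).clog h

theorem hasDerivAt_log_neg_sub {p ζ : ℂ} (h : -(ζ - p) ∈ slitPlane) :
    HasDerivAt (fun ζ ↦ Complex.log (-(ζ - p))) (ζ - p)⁻¹ ζ := by
  have := ((hasDerivAt_id ζ).sub_const p).fun_neg.clog h
  rwa [neg_div_neg_eq, one_div] at this

theorem hasDerivAt_add_const_mul_I (y x : ℝ) : HasDerivAt (fun x : ℝ ↦ (x + y * I : ℂ)) 1 x :=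
  ((hasDerivAt_id (x : ℂ)).add_const _).comp_ofReal

theorem hasDerivAt_const_add_mul_I (x y : ℝ) : HasDerivAt (fun y : ℝ ↦ (x + y * I : ℂ)) I y := by
  simpa using (((hasDerivAt_id (y : ℂ)).mul_const I).const_add (x : ℂ)).comp_ofReal

theorem rectangleIntegral_inv_sub {p : ℂ} (hp : p ∈ Ioo a b ×ℂ Ioo c d) :
    rectangleIntegral (fun ζ ↦ (ζ - p)⁻¹) a b c d = 2 * π * I := by
  obtain ⟨⟨hmc, hmd⟩, hmb, hma⟩ := forall_mem_rectangleBoundary.1 fun ζ hζ ↦ hζ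
  have hcont := continuousOn_inv_sub_rectangleBoundary hp
  obtain ⟨⟨ha, hb⟩, hc, hd⟩ := hp
  have bottom := smul_integral_comp_eq_sub_of_hasDerivAt (f := fun ζ ↦ (ζ - p)⁻¹) (t := a) (u := b)
    (fun x _ ↦ hasDerivAt_add_const_mul_I c x)
    (fun x _ ↦ hasDerivAt_log_sub (Or.inr (by simpa [sub_eq_zero] using hc.ne)))
    (hcont.comp (by fun_prop) hmc)
  have top := smul_integral_comp_eq_sub_of_hasDerivAt (f := fun ζ ↦ (ζ - p)⁻¹) (t := a) (u := b)
    (fun x _ ↦ hasDerivAt_add_const_mul_I d x)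
    (fun x _ ↦ hasDerivAt_log_sub (Or.inr (by simpa [sub_eq_zero] using hd.ne')))
    (hcont.comp (by fun_prop) hmd)
  have right := smul_integral_comp_eq_sub_of_hasDerivAt (f := fun ζ ↦ (ζ - p)⁻¹) (t := c) (u := d)
    (fun y _ ↦ hasDerivAt_const_add_mul_I b y)
    (fun y _ ↦ hasDerivAt_log_sub (Or.inl (by simpa using hb)))
    (hcont.comp (by fun_prop) hmb)
  have left := smul_integral_comp_eq_sub_of_hasDerivAt (f := fun ζ ↦ (ζ - p)⁻¹) (t := c) (u := d)
    (fun y _ ↦ hasDerivAt_const_add_mul_I a y)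
    (fun y _ ↦ hasDerivAt_log_neg_sub (Or.inl (by simpa using ha)))
    (hcont.comp (by fun_prop) hma)
  have jump_top := log_sub_log_neg_of_im_pos (z := a + d * I - p) (by simpa using hd)
  have jump_bottom := log_sub_log_neg_of_im_neg (z := a + c * I - p) (by simpa using hc)
  rw [one_smul] at bottom top
  rw [rectangleIntegral, bottom, top, right, left]
  linear_combination jump_top - jump_bottom

theorem uIcc_reProdIm_uIcc_mem_nhds {p : ℂ} (hp : p ∈ Ioo a b ×ℂ Ioo c d) :
    [[a, b]] ×ℂ [[c, d]] ∈ 𝓝 p :=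
  Filter.mem_of_superset ((isOpen_Ioo.reProdIm isOpen_Ioo).mem_nhds hp) <|
    reProdIm_subset_iff.2 <| prod_mono (Ioo_subset_Icc_self.trans Icc_subset_uIcc)
      (Ioo_subset_Icc_self.trans Icc_subset_uIcc)

theorem rectangleIntegral_sub_inv_smul [CompleteSpace E] {p : ℂ} (hp : p ∈ Ioo a b ×ℂ Ioo c d)
    (hf : DifferentiableOn ℂ f ([[a, b]] ×ℂ [[c, d]])) :
    rectangleIntegral (fun ζ ↦ (ζ - p)⁻¹ • f ζ) a b c d = (2 * π * I : ℂ) • f p := by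
  have hslope : DifferentiableOn ℂ (dslope f p) ([[a, b]] ×ℂ [[c, d]]) :=
    (differentiableOn_dslope (uIcc_reProdIm_uIcc_mem_nhds hp)).2 hf
  calc rectangleIntegral (fun ζ ↦ (ζ - p)⁻¹ • f ζ) a b c d
      = rectangleIntegral (fun ζ ↦ dslope f p ζ + (ζ - p)⁻¹ • f p) a b c d := by
        refine rectangleIntegral_congr fun ζ hζ ↦ ?_
        have hne : ζ ≠ p := fun h ↦ notMem_rectangleBoundary_of_mem_Ioo hp (h ▸ hζ)
        simp only [dslope_of_ne f hne, slope, vsub_eq_sub, ← smul_add, sub_add_cancel]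
    _ = rectangleIntegral (dslope f p) a b c d +
          rectangleIntegral (fun ζ ↦ (ζ - p)⁻¹ • f p) a b c d :=
        rectangleIntegral_add (hslope.continuousOn.mono rectangleBoundary_subset)
          ((continuousOn_inv_sub_rectangleBoundary hp).smul continuousOn_const)
    _ = (2 * π * I : ℂ) • f p := by
        have goursat : rectangleIntegral (dslope f p) a b c d = 0 :=
          integral_boundary_rect_eq_zero_of_differentiableOn (dslope f p) ⟨a, c⟩ ⟨b, d⟩ hslope
        rw [goursat, zero_add, rectangleIntegral_smul_const, rectangleIntegral_inv_sub hp]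

theorem rectangleIntegral_inv_smul_of_simple_zero [CompleteSpace E] {h : ℂ → ℂ} {p : ℂ}
    (hp : p ∈ Ioo a b ×ℂ Ioo c d) (hf : DifferentiableOn ℂ f ([[a, b]] ×ℂ [[c, d]]))
    (hh : DifferentiableOn ℂ h ([[a, b]] ×ℂ [[c, d]]))
    (hzero : ∀ ζ ∈ [[a, b]] ×ℂ [[c, d]], h ζ = 0 ↔ ζ = p) (hderiv : deriv h p ≠ 0) :
    rectangleIntegral (fun ζ ↦ (h ζ)⁻¹ • f ζ) a b c d =
      (2 * π * I : ℂ) • (deriv h p)⁻¹ • f p := by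
  have hnhds := uIcc_reProdIm_uIcc_mem_nhds hp
  have hfactor (ζ : ℂ) : h ζ = (ζ - p) * dslope h p ζ := by
    rw [← smul_eq_mul, sub_smul_dslope, (hzero p (mem_of_mem_nhds hnhds)).2 rfl, sub_zero]
  have hslope_ne : ∀ ζ ∈ [[a, b]] ×ℂ [[c, d]], dslope h p ζ ≠ 0 := by
    intro ζ hζ h0
    obtain rfl : ζ = p := (hzero ζ hζ).1 (by rw [hfactor, h0, mul_zero])
    exact hderiv (by rwa [dslope_same] at h0)
  have hquot : DifferentiableOn ℂ (fun ζ ↦ (dslope h p ζ)⁻¹ • f ζ) ([[a, b]] ×ℂ [[c, d]]) :=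
    (((differentiableOn_dslope hnhds).2 hh).inv hslope_ne).smul hf
  simpa only [hfactor, mul_inv, mul_smul, dslope_same] using rectangleIntegral_sub_inv_smul hp hquot

theorem tendsto_rectangleIntegral {ι : Type*} {l : Filter ι} [l.IsCountablyGenerated]
    {a b : ι → ℝ} (ha : Tendsto a l atBot) (hb : Tendsto b l atTop)
    (hc : Integrable fun x : ℝ ↦ f (x + c * I)) (hd : Integrable fun x : ℝ ↦ f (x + d * I))
    (hleft : Tendsto (fun i ↦ ∫ y in c..d, f (a i + y * I)) l (𝓝 0))
    (hright : Tendsto (fun i ↦ ∫ y in c..d, f (b i + y * I)) l (𝓝 0)) :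
    Tendsto (fun i ↦ rectangleIntegral f (a i) (b i) c d) l
      (𝓝 ((∫ x : ℝ, f (x + c * I)) - ∫ x : ℝ, f (x + d * I))) := by
  have := (((intervalIntegral_tendsto_integral hc ha hb).sub
    (intervalIntegral_tendsto_integral hd ha hb)).add (hright.const_smul I)).sub
    (hleft.const_smul I)
  simpa only [rectangleIntegral, smul_zero, add_zero, sub_zero] using this

end RectangleIntegral

section ElementaryFunctions

theorem sq_le_sinh_sq (x : ℝ) : x ^ 2 ≤ Real.sinh x ^ 2 := by
  rw [sq_le_sq, Real.abs_sinh]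
  exact Real.self_le_sinh_iff.2 (abs_nonneg x)

theorem one_add_sq_div_two_le_cosh (x : ℝ) : 1 + x ^ 2 / 2 ≤ Real.cosh x := by
  have half_angle : Real.cosh x = 1 + 2 * Real.sinh (x / 2) ^ 2 := by
    have := Real.cosh_two_mul (x / 2)
    rw [mul_div_cancel₀ x two_ne_zero, Real.cosh_sq] at this
    linarith
  linarith [sq_le_sinh_sq (x / 2)]

theorem two_le_cos_add_cosh (x : ℝ) : 2 ≤ Real.cos x + Real.cosh x := by
  linarith [Real.one_sub_sq_div_two_le_cos (x := x), one_add_sq_div_two_le_cosh x]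

theorem exp_div_two_le_cosh (x : ℝ) : Real.exp x / 2 ≤ Real.cosh x := by
  rw [Real.cosh_eq]
  linarith [Real.exp_pos (-x)]

theorem exp_div_three_le_cos_add_cosh (x : ℝ) :
    Real.exp x / 3 ≤ Real.cos x + Real.cosh x := by
  linarith [two_le_cos_add_cosh x, Real.neg_one_le_cos x, exp_div_two_le_cosh x]

theorem exp_div_four_le_sinh {x : ℝ} (hx : 1 ≤ x) : Real.exp x / 4 ≤ Real.sinh x := by
  have hexp_neg : Real.exp (-x) ≤ 1 := Real.exp_le_one_iff.2 (by linarith)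
  rw [Real.sinh_eq]
  linarith [Real.add_one_le_exp x]

theorem half_le_cos_of_sq_le_one {x : ℝ} (hx : x ^ 2 ≤ 1) : 1 / 2 ≤ Real.cos x := by
  linarith [Real.one_sub_sq_div_two_le_cos (x := x)]

theorem sq_norm_cos (z : ℂ) :
    ‖Complex.cos z‖ ^ 2 = Real.cos z.re ^ 2 + Real.sinh z.im ^ 2 := by
  have hcos : Complex.cos z = (Real.cos z.re * Real.cosh z.im : ℝ) +
      (-(Real.sin z.re * Real.sinh z.im) : ℝ) * I := by
    rw [Complex.cos_eq]
    push_cast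
    ring
  rw [Complex.sq_norm, hcos, normSq_add_mul_I]
  linear_combination
    Real.cos z.re ^ 2 * Real.cosh_sq z.im + Real.sinh z.im ^ 2 * Real.sin_sq_add_cos_sq z.re

theorem sinh_re_le_norm_cosh (z : ℂ) : Real.sinh z.re ≤ ‖Complex.cosh z‖ := by
  refine le_of_sq_le_sq ?_ (norm_nonneg _)
  rw [← Complex.cos_mul_I, sq_norm_cos]
  simpa using sq_nonneg (Real.cos z.im)

theorem cosh_ne_zero_of_re_pos {z : ℂ} (hz : 0 < z.re) : Complex.cosh z ≠ 0 :=
  norm_pos_iff.1 ((Real.sinh_pos_iff.2 hz).trans_le (sinh_re_le_norm_cosh z))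

/- If `|Im z| < 1` on the circle `‖z‖ = N * π`, then `(N * π - |Re z|) ^ 2 ≤ (Im z) ^ 2 < 1`, so
`Re z` is within distance `1` of `± N * π`, where the cosine is `± 1`. -/
theorem half_le_norm_cos_of_norm_eq_nat_mul_pi {z : ℂ} {N : ℕ} (hz : ‖z‖ = N * π) :
    1 / 2 ≤ ‖Complex.cos z‖ := by
  refine le_of_sq_le_sq ?_ (norm_nonneg _)
  rw [sq_norm_cos]
  rcases le_or_gt 1 (z.im ^ 2) with him | him
  · linarith [sq_le_sinh_sq z.im, sq_nonneg (Real.cos z.re)]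
  · have hre : |z.re| ≤ N * π := hz ▸ abs_re_le_norm z
    have hcircle : (N * π - |z.re|) * (N * π + |z.re|) = z.im ^ 2 := by
      have := Complex.sq_norm z
      rw [hz, normSq_apply] at this
      linear_combination this - abs_mul_abs_self z.re
    have hclose : (N * π - |z.re|) ^ 2 ≤ 1 := by nlinarith [abs_nonneg z.re]
    have hcos := half_le_cos_of_sq_le_one hclose
    rw [Real.cos_nat_mul_pi_sub, Real.cos_abs] at hcos
    have hcos_sq : ((-1) ^ N * Real.cos z.re) ^ 2 = Real.cos z.re ^ 2 := by
      rw [mul_pow, ← pow_mul, mul_comm N 2, pow_mul, neg_one_sq, one_pow, one_mul]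
    nlinarith [sq_nonneg (Real.sinh z.im)]

theorem cosh_mul_cos (z : ℂ) :
    Complex.cosh z * Complex.cos z =
      (Complex.cos ((1 + I) * z) + Complex.cosh ((1 + I) * z)) / 2 := by
  have hrotate : (1 + I) * z * I = -(z - z * I) := by linear_combination z * I_sq
  rw [← Complex.cos_mul_I ((1 + I) * z), hrotate, Complex.cos_neg, one_add_mul, mul_comm I,
    Complex.cos_add, Complex.cos_sub, Complex.cos_mul_I]
  ring

theorem log_one_add_I : Complex.log (1 + I) = Real.log √2 + (π / 4 : ℝ) * I := by
  have hsqrt : (0 : ℝ) < √2 := by positivity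
  have hsq : ((√2 : ℝ) : ℂ) ^ 2 = 2 := by
    rw [← ofReal_pow, Real.sq_sqrt zero_le_two, ofReal_ofNat]
  have hpolar : (1 + I : ℂ) = Complex.exp (Real.log √2 + (π / 4 : ℝ) * I) := by
    rw [Complex.exp_add_mul_I, ← ofReal_exp, Real.exp_log hsqrt, ← ofReal_cos, ← ofReal_sin,
      Real.cos_pi_div_four, Real.sin_pi_div_four]
    push_cast
    linear_combination (-1 / 2 * (1 + I)) * hsq
  rw [hpolar, Complex.log_exp] <;> simp <;> linarith [Real.pi_pos]

theorem one_add_I_ne_zero : (1 + I : ℂ) ≠ 0 := fun h ↦ by simpa using congrArg im h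

theorem one_add_I_cpow_add_one (s : ℂ) : (1 + I) ^ (s + 1) = (1 + I) ^ (s - 1) * (2 * I) := by
  rw [show s + 1 = s - 1 + 2 by ring, cpow_add _ _ one_add_I_ne_zero, cpow_ofNat]
  linear_combination (1 + I) ^ (s - 1) * I_sq

theorem exp_mul_log_ofReal {y : ℝ} (hy : 0 < y) (s : ℂ) :
    Complex.exp (s * Real.log y) = (y : ℂ) ^ s := by
  rw [cpow_def_of_ne_zero (ofReal_ne_zero.2 hy.ne'), ofReal_log hy.le, mul_comm]

theorem exp_ofReal_log {y : ℝ} (hy : 0 < y) : Complex.exp (Real.log y) = y := by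
  rw [← ofReal_exp, Real.exp_log hy]

theorem re_exp_pos_of_abs_im_lt {z : ℂ} (hz : |z.im| < π / 2) : 0 < (Complex.exp z).re := by
  rw [Complex.exp_re]
  exact mul_pos (Real.exp_pos _) (Real.cos_pos_of_mem_Ioo (abs_lt.1 hz))

theorem exp_div_two_le_re_exp {z : ℂ} (hz : |z.im| ≤ 1) :
    Real.exp z.re / 2 ≤ (Complex.exp z).re := by
  have hcos := half_le_cos_of_sq_le_one ((sq_le_one_iff_abs_le_one z.im).2 hz)
  rw [Complex.exp_re]
  linarith [mul_le_mul_of_nonneg_left hcos (Real.exp_pos z.re).le]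

end ElementaryFunctions

section CosineZeros

/-- The `n`-th positive zero of the cosine, counted from `n = 0`. -/
noncomputable def cosZero (n : ℕ) : ℝ := (2 * n + 1) / 2 * π

theorem cosZero_pos (n : ℕ) : 0 < cosZero n := by
  unfold cosZero
  positivity

theorem cosZero_eq_nat_mul_pi_add (n : ℕ) : cosZero n = n * π + π / 2 := by
  unfold cosZero
  ring

theorem nat_mul_pi_lt_cosZero (n : ℕ) : n * π < cosZero n := by
  linarith [cosZero_eq_nat_mul_pi_add n, Real.pi_pos]

theorem cosZero_lt_nat_add_one_mul_pi (n : ℕ) : cosZero n < (n + 1) * π := by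
  linarith [cosZero_eq_nat_mul_pi_add n, Real.pi_pos]

theorem cos_cosZero (n : ℕ) : Real.cos (cosZero n) = 0 := by
  rw [cosZero_eq_nat_mul_pi_add, Real.cos_add_pi_div_two, Real.sin_nat_mul_pi, neg_zero]

theorem sin_cosZero (n : ℕ) : Real.sin (cosZero n) = (-1) ^ n := by
  rw [cosZero_eq_nat_mul_pi_add, Real.sin_add_pi_div_two, Real.cos_nat_mul_pi]

theorem exists_eq_cosZero_of_cos_eq_zero {w : ℂ} (hre : 0 < w.re) (hw : Complex.cos w = 0) :
    ∃ n : ℕ, w = cosZero n := by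
  obtain ⟨k, rfl⟩ := Complex.cos_eq_zero_iff.1 hw
  have hcast : (2 * (k : ℂ) + 1) * π / 2 = ((2 * (k : ℝ) + 1) * π / 2 : ℝ) := by push_cast; rfl
  rw [hcast, ofReal_re] at hre
  have hk : (0 : ℝ) < 2 * k + 1 := by
    by_contra! h
    linarith [mul_nonpos_of_nonpos_of_nonneg h Real.pi_pos.le]
  lift k to ℕ using by
    have : 0 < 2 * k + 1 := by exact_mod_cast hk
    omega
  refine ⟨k, ?_⟩
  rw [cosZero]
  push_cast
  ring

theorem eq_of_cosZero_mem_Icc {m n : ℕ} (h : cosZero m ∈ Set.Icc (n * π) ((n + 1) * π)) :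
    m = n := by
  obtain ⟨hlower, hupper⟩ := h
  have hnm : (2 * n : ℝ) ≤ 2 * m + 1 := by
    refine le_of_mul_le_mul_right ?_ Real.pi_pos
    linarith [cosZero_eq_nat_mul_pi_add m]
  have hmn : (2 * m + 1 : ℝ) ≤ 2 * n + 2 := by
    refine le_of_mul_le_mul_right ?_ Real.pi_pos
    linarith [cosZero_eq_nat_mul_pi_add m]
  norm_cast at hnm hmn
  omega

theorem exists_eq_log_cosZero_of_cos_exp_eq_zero {z : ℂ} (hz : |z.im| < π / 2)
    (h : Complex.cos (Complex.exp z) = 0) : ∃ n : ℕ, z = Real.log (cosZero n) := by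
  obtain ⟨n, hn⟩ := exists_eq_cosZero_of_cos_eq_zero (re_exp_pos_of_abs_im_lt hz) h
  obtain ⟨him_lower, him_upper⟩ := abs_lt.1 hz
  refine ⟨n, ?_⟩
  rw [ofReal_log (cosZero_pos n).le, ← hn, Complex.log_exp] <;> linarith [Real.pi_pos]

theorem deriv_cos_exp_log_cosZero (n : ℕ) :
    deriv (fun z ↦ Complex.cos (Complex.exp z)) (Real.log (cosZero n)) =
      -((-1) ^ n * cosZero n) := by
  rw [(Complex.hasDerivAt_exp _).ccos.deriv, exp_ofReal_log (cosZero_pos n), ← ofReal_sin,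
    sin_cosZero]
  push_cast
  ring

end CosineZeros

section BerndtIntegrand

open MeasureTheory Set Filter

/-- The integrand of the Berndt-type integral of order one, with a complex exponent. -/
noncomputable def berndtIntegrand (s : ℂ) (x : ℝ) : ℂ :=
  (x : ℂ) ^ s / (Complex.cos x + Complex.cosh x)

theorem cos_add_cosh_ofReal_ne_zero (x : ℝ) : Complex.cos x + Complex.cosh x ≠ 0 := by
  rw [← ofReal_cos, ← ofReal_cosh, ← ofReal_add, ofReal_ne_zero]
  linarith [two_le_cos_add_cosh x]

theorem continuousOn_berndtIntegrand (s : ℂ) : ContinuousOn (berndtIntegrand s) (Ioi 0) := by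
  refine ContinuousOn.div ?_ (by fun_prop) fun x _ ↦ cos_add_cosh_ofReal_ne_zero x
  exact continuous_ofReal.continuousOn.cpow_const fun x hx ↦ ofReal_mem_slitPlane.2 hx

theorem norm_berndtIntegrand_le (s : ℂ) (x : ℝ) :
    ‖berndtIntegrand s x‖ ≤ 3 * ‖((-x).exp : ℂ) * (x : ℂ) ^ s‖ := by
  have hden : Real.exp x / 3 ≤ ‖Complex.cos x + Complex.cosh x‖ := by
    rw [← ofReal_cos, ← ofReal_cosh, ← ofReal_add, norm_real]
    exact (exp_div_three_le_cos_add_cosh x).trans (le_abs_self _)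
  calc ‖berndtIntegrand s x‖ ≤ ‖(x : ℂ) ^ s‖ / (Real.exp x / 3) := by
        rw [berndtIntegrand, norm_div]
        gcongr
    _ = 3 * ‖((-x).exp : ℂ) * (x : ℂ) ^ s‖ := by
        rw [norm_mul, norm_real, Real.norm_of_nonneg (Real.exp_pos _).le, Real.exp_neg]
        field_simp

theorem integrableOn_berndtIntegrand {s : ℂ} (hs : -1 < s.re) :
    IntegrableOn (berndtIntegrand s) (Ioi 0) := by
  have hgamma := Complex.GammaIntegral_convergent (s := s + 1)
    (by simpa using neg_lt_iff_pos_add.1 hs)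
  rw [add_sub_cancel_right] at hgamma
  exact (hgamma.norm.const_mul 3).mono'
    ((continuousOn_berndtIntegrand s).aestronglyMeasurable measurableSet_Ioi)
    (Eventually.of_forall (norm_berndtIntegrand_le s))

end BerndtIntegrand

section BerndtKernel

open MeasureTheory Set Filter Topology
open scoped Interval

/-- The function `w ^ s / (cosh w * cos w)`, whose sector integrals give the Berndt integral, in the
logarithmic coordinate `w = exp z`; the factor `w` comes from `dw = w dz`. -/
noncomputable def berndtKernel (s z : ℂ) : ℂ :=
  Complex.exp ((s + 1) * z) / (Complex.cosh (Complex.exp z) * Complex.cos (Complex.exp z))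

/-- The `n`-th term of the residue series, with the power `π ^ s` of the zero `cosZero n` not yet
pulled out. -/
noncomputable def berndtTerm (s : ℂ) (n : ℕ) : ℂ :=
  (-1) ^ n * (cosZero n : ℂ) ^ s / Complex.cosh (cosZero n)

theorem berndtKernel_add_pi_div_two_mul_I (s z : ℂ) :
    berndtKernel s (z + π / 2 * I) = I ^ (s + 1) * berndtKernel s z := by
  have hexp : Complex.exp (z + π / 2 * I) = Complex.exp z * I := by
    rw [Complex.exp_add, Complex.exp_pi_div_two_mul_I]
  rw [berndtKernel, berndtKernel, hexp, Complex.cosh_mul_I, Complex.cos_mul_I, mul_add,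
    Complex.exp_add, cpow_def_of_ne_zero I_ne_zero, log_I, mul_comm (π / 2 * I : ℂ)]
  ring

theorem berndtKernel_ofReal_sub_log (s : ℂ) (u : ℝ) :
    berndtKernel s (u - Complex.log (1 + I)) =
      2 / (1 + I) ^ (s + 1) * (Real.exp u • berndtIntegrand s (Real.exp u)) := by
  have hexp : (1 + I) * Complex.exp (u - Complex.log (1 + I)) = Real.exp u := by
    rw [Complex.exp_sub, Complex.exp_log one_add_I_ne_zero, mul_div_cancel₀ _ one_add_I_ne_zero,
      ofReal_exp]
  have hpow : Complex.exp ((s + 1) * u) = (Real.exp u : ℂ) ^ s * Real.exp u := by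
    rw [← exp_mul_log_ofReal (Real.exp_pos u), Real.log_exp, ofReal_exp, ← Complex.exp_add,
      add_one_mul]
  rw [berndtKernel, cosh_mul_cos, hexp, mul_sub, Complex.exp_sub, hpow,
    cpow_def_of_ne_zero one_add_I_ne_zero, mul_comm (Complex.log _), berndtIntegrand, real_smul]
  field_simp

theorem berndtKernel_lower_edge (s : ℂ) (t : ℝ) :
    berndtKernel s (t + (-(π / 4) : ℝ) * I) =
      berndtKernel s ((t + Real.log √2 : ℝ) - Complex.log (1 + I)) := by
  rw [log_one_add_I]
  congr 1
  push_cast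
  ring

theorem berndtKernel_upper_edge (s : ℂ) (t : ℝ) :
    berndtKernel s (t + (π / 4 : ℝ) * I) =
      I ^ (s + 1) * berndtKernel s (t + (-(π / 4) : ℝ) * I) := by
  rw [← berndtKernel_add_pi_div_two_mul_I]
  congr 1
  push_cast
  ring

theorem integrable_berndtKernel_lower_edge {s : ℂ} (hs : -1 < s.re) :
    Integrable fun t : ℝ ↦ berndtKernel s (t + (-(π / 4) : ℝ) * I) := by
  simp only [berndtKernel_lower_edge, berndtKernel_ofReal_sub_log]
  exact ((integrable_exp_smul_comp_exp_iff.2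
    (integrableOn_berndtIntegrand hs)).const_mul _).comp_add_right _

theorem integrable_berndtKernel_upper_edge {s : ℂ} (hs : -1 < s.re) :
    Integrable fun t : ℝ ↦ berndtKernel s (t + (π / 4 : ℝ) * I) := by
  simp only [berndtKernel_upper_edge]
  exact (integrable_berndtKernel_lower_edge hs).const_mul _

theorem integral_berndtKernel_lower_edge (s : ℂ) :
    ∫ t : ℝ, berndtKernel s (t + (-(π / 4) : ℝ) * I) =
      2 / (1 + I) ^ (s + 1) * ∫ x in Ioi 0, berndtIntegrand s x := by
  simp only [berndtKernel_lower_edge]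
  rw [integral_add_right_eq_self (fun u : ℝ ↦ berndtKernel s (u - Complex.log (1 + I)))]
  simp only [berndtKernel_ofReal_sub_log]
  rw [integral_const_mul, integral_exp_smul_comp_exp]

theorem integral_berndtKernel_upper_edge (s : ℂ) :
    ∫ t : ℝ, berndtKernel s (t + (π / 4 : ℝ) * I) =
      I ^ (s + 1) * ∫ t : ℝ, berndtKernel s (t + (-(π / 4) : ℝ) * I) := by
  simp only [berndtKernel_upper_edge, integral_const_mul]

theorem abs_im_lt_pi_div_two_of_mem_strip {t u : ℝ} {ζ : ℂ}
    (hζ : ζ ∈ [[t, u]] ×ℂ [[-(π / 4), π / 4]]) : |ζ.im| < π / 2 := by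
  have him := hζ.2
  rw [mem_preimage, uIcc_of_le (by linarith [Real.pi_pos])] at him
  exact abs_lt.2 ⟨by linarith [Real.pi_pos, him.1], by linarith [Real.pi_pos, him.2]⟩

theorem cos_exp_eq_zero_iff_of_mem_slice {n : ℕ} {t u : ℝ} (htu : t ≤ u)
    (ht : n * π ≤ Real.exp t) (hu : Real.exp u ≤ (n + 1) * π) {ζ : ℂ}
    (hζ : ζ ∈ [[t, u]] ×ℂ [[-(π / 4), π / 4]]) :
    Complex.cos (Complex.exp ζ) = 0 ↔ ζ = Real.log (cosZero n) := by
  constructor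
  · intro h
    obtain ⟨m, rfl⟩ := exists_eq_log_cosZero_of_cos_exp_eq_zero
      (abs_im_lt_pi_div_two_of_mem_strip hζ) h
    have hre := hζ.1
    rw [mem_preimage, uIcc_of_le htu, ofReal_re] at hre
    obtain ⟨hlower, hupper⟩ := hre
    rw [Real.le_log_iff_exp_le (cosZero_pos m)] at hlower
    rw [Real.log_le_iff_le_exp (cosZero_pos m)] at hupper
    rw [eq_of_cosZero_mem_Icc ⟨ht.trans hlower, hupper.trans hu⟩]
  · rintro rfl
    rw [exp_ofReal_log (cosZero_pos n), ← ofReal_cos, cos_cosZero, ofReal_zero]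

theorem rectangleIntegral_berndtKernel_slice (s : ℂ) {n : ℕ} {t u : ℝ} (ht : n * π ≤ Real.exp t)
    (htn : Real.exp t < cosZero n) (hnu : cosZero n < Real.exp u)
    (hu : Real.exp u ≤ (n + 1) * π) :
    rectangleIntegral (berndtKernel s) t u (-(π / 4)) (π / 4) =
      -(2 * π * I * berndtTerm s n) := by
  have hY := cosZero_pos n
  have hp : (Real.log (cosZero n) : ℂ) ∈ Ioo t u ×ℂ Ioo (-(π / 4)) (π / 4) := by
    simp [mem_reProdIm, Real.lt_log_iff_exp_lt hY, Real.log_lt_iff_lt_exp hY, htn, hnu, Real.pi_pos]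
  have hnum : DifferentiableOn ℂ
      (fun z ↦ Complex.exp ((s + 1) * z) / Complex.cosh (Complex.exp z))
      ([[t, u]] ×ℂ [[-(π / 4), π / 4]]) :=
    DifferentiableOn.div (by fun_prop) (by fun_prop) fun z hz ↦ cosh_ne_zero_of_re_pos <|
      re_exp_pos_of_abs_im_lt <| abs_im_lt_pi_div_two_of_mem_strip hz
  have hderiv : (-((-1) ^ n * cosZero n) : ℂ) ≠ 0 := by simp [hY.ne']
  have hresidue := rectangleIntegral_inv_smul_of_simple_zero hp hnum
    (h := fun z ↦ Complex.cos (Complex.exp z)) (by fun_prop)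
    (fun ζ hζ ↦ cos_exp_eq_zero_iff_of_mem_slice (Real.exp_lt_exp.1 (htn.trans hnu)).le ht hu hζ)
    (by rwa [deriv_cos_exp_log_cosZero])
  have hkernel : berndtKernel s = fun z ↦ (Complex.cos (Complex.exp z))⁻¹ •
      (Complex.exp ((s + 1) * z) / Complex.cosh (Complex.exp z)) := by
    ext z
    rw [berndtKernel, smul_eq_mul, ← div_div, div_eq_inv_mul]
  have hY_ne : (cosZero n : ℂ) ≠ 0 := ofReal_ne_zero.2 hY.ne'
  have hsign : ((-1 : ℂ) ^ n)⁻¹ = (-1) ^ n := by rw [← inv_pow, inv_neg_one]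
  rw [hkernel, hresidue, deriv_cos_exp_log_cosZero, exp_mul_log_ofReal hY, exp_ofReal_log hY,
    cpow_add _ _ hY_ne, cpow_one, berndtTerm, smul_eq_mul, smul_eq_mul, inv_neg, mul_inv, hsign]
  field_simp

theorem rectangleIntegral_berndtKernel {s : ℂ} (hs : -1 < s.re) {R : ℝ} (hR : 0 ≤ R) (N : ℕ) :
    rectangleIntegral (berndtKernel s) (-R) (Real.log ((N + 1) * π)) (-(π / 4)) (π / 4) =
      -(2 * π * I * ∑ n ∈ Finset.range (N + 1), berndtTerm s n) := by
  have hlog (N : ℕ) : Real.exp (Real.log ((N + 1) * π)) = (N + 1) * π :=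
    Real.exp_log (by positivity)
  induction N with
  | zero =>
    have hleft : Real.exp (-R) < cosZero 0 := by
      have := Real.exp_le_one_iff.2 (neg_nonpos.2 hR)
      have := cosZero_eq_nat_mul_pi_add 0
      push_cast at this
      linarith [Real.pi_gt_three]
    have hright := cosZero_lt_nat_add_one_mul_pi 0
    rw [Finset.sum_range_one]
    exact rectangleIntegral_berndtKernel_slice s (by simp [(Real.exp_pos _).le]) hleft
      (hright.trans_eq (hlog 0).symm) (hlog 0).le
  | succ N ih =>
    have hlower {t u : ℝ} :=
      (integrable_berndtKernel_lower_edge hs).intervalIntegrable (a := t) (b := u)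
    have hupper {t u : ℝ} :=
      (integrable_berndtKernel_upper_edge hs).intervalIntegrable (a := t) (b := u)
    have hcast : (N + 1 : ℝ) * π = (N + 1 : ℕ) * π := by rw [Nat.cast_succ]
    have hslice := rectangleIntegral_berndtKernel_slice s
      (hcast.symm.trans (hlog N).symm).le
      (((hlog N).trans hcast).trans_lt (nat_mul_pi_lt_cosZero (N + 1)))
      ((cosZero_lt_nat_add_one_mul_pi (N + 1)).trans_eq (hlog (N + 1)).symm) (hlog (N + 1)).le
    rw [← rectangleIntegral_add_adjacent hlower hlower hupper hupper, ih, hslice,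
      Finset.sum_range_succ _ (N + 1)]
    ring

theorem norm_exp_add_one_mul_le (s : ℂ) {z : ℂ} (hz : |z.im| ≤ 1) :
    ‖Complex.exp ((s + 1) * z)‖ ≤ Real.exp |s.im| * Real.exp ((s.re + 1) * z.re) := by
  have him : -(s.im * z.im) ≤ |s.im| := by
    calc -(s.im * z.im) ≤ |s.im| * |z.im| := (neg_le_abs _).trans_eq (abs_mul _ _)
      _ ≤ |s.im| := mul_le_of_le_one_right (abs_nonneg _) hz
  have hre : ((s + 1) * z).re = -(s.im * z.im) + (s.re + 1) * z.re := by
    rw [mul_re, add_re, add_im, one_re, one_im]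
    ring
  rw [Complex.norm_exp, hre, Real.exp_add]
  gcongr

theorem norm_berndtKernel_le (s : ℂ) {z : ℂ} {δ : ℝ} (hz : |z.im| ≤ 1) (hδ : 0 < δ)
    (hden : δ ≤ ‖Complex.cosh (Complex.exp z) * Complex.cos (Complex.exp z)‖) :
    ‖berndtKernel s z‖ ≤ Real.exp |s.im| * Real.exp ((s.re + 1) * z.re) / δ := by
  rw [berndtKernel, norm_div]
  gcongr
  exact norm_exp_add_one_mul_le s hz

theorem exp_half_mul_div_eight_le_norm_cosh_mul_cos {z : ℂ} {N : ℕ} (hz : |z.im| ≤ 1)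
    (hN : N ≠ 0) (hre : Real.exp z.re = N * π) :
    Real.exp (N * π / 2) / 8 ≤
      ‖Complex.cosh (Complex.exp z) * Complex.cos (Complex.exp z)‖ := by
  have hcos : 1 / 2 ≤ ‖Complex.cos (Complex.exp z)‖ :=
    half_le_norm_cos_of_norm_eq_nat_mul_pi ((Complex.norm_exp z).trans hre)
  have hre_exp : N * π / 2 ≤ (Complex.exp z).re := hre ▸ exp_div_two_le_re_exp hz
  have hone : 1 ≤ N * π / 2 := by
    have : (1 : ℝ) ≤ N := Nat.one_le_cast.2 (Nat.one_le_iff_ne_zero.2 hN)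
    nlinarith [Real.pi_gt_three]
  have hcosh : Real.exp (N * π / 2) / 4 ≤ ‖Complex.cosh (Complex.exp z)‖ :=
    calc Real.exp (N * π / 2) / 4 ≤ Real.sinh (N * π / 2) := exp_div_four_le_sinh hone
      _ ≤ Real.sinh (Complex.exp z).re := Real.sinh_le_sinh.2 hre_exp
      _ ≤ ‖Complex.cosh (Complex.exp z)‖ := sinh_re_le_norm_cosh _
  calc Real.exp (N * π / 2) / 8 = Real.exp (N * π / 2) / 4 * (1 / 2) := by ring
    _ ≤ ‖Complex.cosh (Complex.exp z)‖ * ‖Complex.cos (Complex.exp z)‖ := by gcongr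
    _ = _ := (norm_mul _ _).symm

theorem abs_im_le_one_of_mem_uIoc {x y : ℝ} (hy : y ∈ Ι (-(π / 4)) (π / 4)) :
    |(x + y * I : ℂ).im| ≤ 1 := by
  rw [uIoc_of_le (by linarith [Real.pi_pos])] at hy
  simpa using abs_le.2 ⟨by linarith [Real.pi_le_four, hy.1], by linarith [Real.pi_le_four, hy.2]⟩

theorem tendsto_integral_berndtKernel_left_edge {s : ℂ} (hs : -1 < s.re) :
    Tendsto (fun t : ℝ ↦ ∫ y in -(π / 4)..π / 4, berndtKernel s (t + y * I)) atBot (𝓝 0) := by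
  have hden : ∀ᶠ w : ℂ in 𝓝 0, 1 / 2 < ‖Complex.cosh w * Complex.cos w‖ := by
    have hcont : Continuous fun w ↦ ‖Complex.cosh w * Complex.cos w‖ := by fun_prop
    exact hcont.continuousAt.eventually (lt_mem_nhds (by simp; norm_num))
  obtain ⟨r, hr, hball⟩ := Metric.eventually_nhds_iff.1 hden
  refine tendsto_intervalIntegral_zero_of_norm_le
    (bound := fun t ↦ Real.exp |s.im| * Real.exp ((s.re + 1) * t) / (1 / 2)) ?_ ?_
  · filter_upwards [Real.tendsto_exp_atBot.eventually (gt_mem_nhds hr)] with t ht y hy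
    have hball' := hball (y := Complex.exp (t + y * I)) (by simpa [Complex.norm_exp] using ht)
    simpa using norm_berndtKernel_le s (abs_im_le_one_of_mem_uIoc hy) one_half_pos hball'.le
  · have hlin : Tendsto (fun t : ℝ ↦ (s.re + 1) * t) atBot atBot :=
      tendsto_id.const_mul_atBot (by linarith)
    simpa using ((Real.tendsto_exp_atBot.comp hlin).const_mul (Real.exp |s.im|)).div_const (1 / 2)

theorem tendsto_nat_add_one_mul_pi_atTop :
    Tendsto (fun N : ℕ ↦ ((N + 1) * π : ℝ)) atTop atTop :=
  (tendsto_natCast_atTop_atTop.atTop_add tendsto_const_nhds).atTop_mul_const Real.pi_pos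

theorem tendsto_integral_berndtKernel_right_edge (s : ℂ) :
    Tendsto (fun N : ℕ ↦ ∫ y in -(π / 4)..π / 4,
      berndtKernel s (Real.log ((N + 1) * π) + y * I)) atTop (𝓝 0) := by
  refine tendsto_intervalIntegral_zero_of_norm_le (bound := fun N : ℕ ↦
    8 * Real.exp |s.im| * (((N + 1) * π) ^ (s.re + 1) * Real.exp (-(1 / 2) * ((N + 1) * π)))) ?_ ?_
  · refine Eventually.of_forall fun N y hy ↦ ?_
    have hpos : (0 : ℝ) < (N + 1) * π := by positivity
    have hden := exp_half_mul_div_eight_le_norm_cosh_mul_cos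
      (z := Real.log ((N + 1) * π) + y * I) (abs_im_le_one_of_mem_uIoc hy) N.succ_ne_zero
      (by simp [Real.exp_log hpos])
    refine (norm_berndtKernel_le s (abs_im_le_one_of_mem_uIoc hy) (by positivity) hden).trans_eq ?_
    have hre : (Real.log ((N + 1) * π) + y * I : ℂ).re = Real.log ((N + 1) * π) := by simp
    have hexp : Real.exp (-(1 / 2) * ((N + 1) * π)) =
        (Real.exp ((N + 1 : ℕ) * π / 2))⁻¹ := by
      rw [← Real.exp_neg]
      push_cast
      ring_nf
    rw [hre, Real.rpow_def_of_pos hpos, mul_comm (Real.log _), hexp]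
    field_simp
  · simpa using ((tendsto_rpow_mul_exp_neg_mul_atTop_nhds_zero (s.re + 1) (1 / 2)
      one_half_pos).comp tendsto_nat_add_one_mul_pi_atTop).const_mul (8 * Real.exp |s.im|)

theorem norm_berndtTerm_le (s : ℂ) (n : ℕ) :
    ‖berndtTerm s n‖ ≤ 2 * (cosZero n ^ s.re * Real.exp (-cosZero n)) := by
  have hcosh := exp_div_two_le_cosh (cosZero n)
  have hcosh_pos := Real.cosh_pos (cosZero n)
  have hrpow := Real.rpow_pos_of_pos (cosZero_pos n) s.re
  rw [berndtTerm, norm_div, norm_mul, norm_pow, norm_neg, norm_one, one_pow, one_mul,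
    norm_cpow_eq_rpow_re_of_pos (cosZero_pos n), ← ofReal_cosh, norm_real,
    Real.norm_of_nonneg hcosh_pos.le]
  calc cosZero n ^ s.re / Real.cosh (cosZero n)
      ≤ cosZero n ^ s.re / (Real.exp (cosZero n) / 2) := by gcongr
    _ = 2 * (cosZero n ^ s.re * Real.exp (-cosZero n)) := by
        rw [Real.exp_neg]
        field_simp

theorem tendsto_cosZero_atTop : Tendsto cosZero atTop atTop :=
  tendsto_atTop_mono (fun n ↦ (nat_mul_pi_lt_cosZero n).le)
    (tendsto_natCast_atTop_atTop.atTop_mul_const Real.pi_pos)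

theorem summable_berndtTerm (s : ℂ) : Summable (berndtTerm s) := by
  have hgeom : Summable fun n ↦ Real.exp (1 / 2 * cosZero n) * Real.exp (-cosZero n) := by
    refine Real.summable_exp_neg_nat.of_nonneg_of_le (fun n ↦ by positivity) fun n ↦ ?_
    rw [← Real.exp_add]
    refine Real.exp_le_exp.2 ?_
    nlinarith [nat_mul_pi_lt_cosZero n, Real.pi_gt_three, n.cast_nonneg (α := ℝ)]
  have hrpow : (fun n ↦ cosZero n ^ s.re) =O[atTop] fun n ↦ Real.exp (1 / 2 * cosZero n) :=
    (isLittleO_rpow_exp_pos_mul_atTop s.re one_half_pos).isBigO.comp_tendsto tendsto_cosZero_atTop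
  have hterm : berndtTerm s =O[atTop] fun n ↦ cosZero n ^ s.re * Real.exp (-cosZero n) :=
    .of_bound 2 <| .of_forall fun n ↦ (norm_berndtTerm_le s n).trans <|
      mul_le_mul_of_nonneg_left (le_abs_self _) zero_le_two
  exact summable_of_isBigO_nat hgeom (hterm.trans (hrpow.mul (Asymptotics.isBigO_refl _ _)))

theorem one_sub_mul_integral_berndtKernel_eq {s : ℂ} (hs : -1 < s.re) :
    (1 - I ^ (s + 1)) * ∫ t : ℝ, berndtKernel s (t + (-(π / 4) : ℝ) * I) =
      -(2 * π * I * ∑' n, berndtTerm s n) := by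
  have hneg : Tendsto (fun N : ℕ ↦ -(N : ℝ)) atTop atBot :=
    tendsto_neg_atTop_atBot.comp tendsto_natCast_atTop_atTop
  have hcontour := tendsto_rectangleIntegral hneg
    (Real.tendsto_log_atTop.comp tendsto_nat_add_one_mul_pi_atTop)
    (integrable_berndtKernel_lower_edge hs) (integrable_berndtKernel_upper_edge hs)
    ((tendsto_integral_berndtKernel_left_edge hs).comp hneg)
    (tendsto_integral_berndtKernel_right_edge s)
  have hresidues : Tendsto (fun N ↦ -(2 * π * I * ∑ n ∈ Finset.range (N + 1), berndtTerm s n))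
      atTop (𝓝 (-(2 * π * I * ∑' n, berndtTerm s n))) :=
    (((summable_berndtTerm s).hasSum.tendsto_sum_nat.comp
      (tendsto_add_atTop_nat 1)).const_mul _).neg
  rw [integral_berndtKernel_upper_edge, ← one_sub_mul] at hcontour
  exact tendsto_nhds_unique hcontour
    (hresidues.congr fun N ↦ (rectangleIntegral_berndtKernel hs N.cast_nonneg N).symm)

theorem tsum_berndtTerm (s : ℂ) :
    ∑' n, berndtTerm s n =
      (π : ℂ) ^ s * ∑' n : ℕ, (-1 : ℂ) ^ n * ((2 * (n : ℂ) + 1) / 2) ^ s /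
        Complex.cosh ((2 * (n : ℂ) + 1) / 2 * π) := by
  rw [← tsum_mul_left]
  refine tsum_congr fun n ↦ ?_
  have hpow := mul_cpow_ofReal_nonneg (a := (2 * n + 1) / 2) (by positivity) Real.pi_pos.le s
  rw [berndtTerm, cosZero, ofReal_mul, hpow]
  push_cast
  ring

end BerndtKernel

theorem berndt_integral_order_one_plus_general (s : ℂ) (hs : -1 < s.re) :
    (1 - I ^ (s + 1)) / (1 + I) ^ (s - 1) *
        ∫ x in Set.Ioi (0 : ℝ), (x : ℂ) ^ s / (Complex.cos x + Complex.cosh x) =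
      2 * (π : ℂ) ^ (s + 1) *
        ∑' n : ℕ, (-1 : ℂ) ^ n * ((2 * (n : ℂ) + 1) / 2) ^ s /
          Complex.cosh ((2 * (n : ℂ) + 1) / 2 * π) := by
  have hcontour := one_sub_mul_integral_berndtKernel_eq hs
  rw [integral_berndtKernel_lower_edge, one_add_I_cpow_add_one, tsum_berndtTerm] at hcontour
  have hpow : (1 + I) ^ (s - 1) ≠ 0 := by simp [cpow_eq_zero_iff, one_add_I_ne_zero]
  rw [cpow_add _ _ (ofReal_ne_zero.2 Real.pi_ne_zero), cpow_one]
  simp only [berndtIntegrand] at hcontour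
  field_simp at hcontour ⊢
  rw [I_sq] at hcontour
  linear_combination hcontour

theorem ofReal_integral_rpow_div_cos_add_cosh (a : ℝ) :
    ((∫ x in Set.Ioi (0 : ℝ), x ^ a / (Real.cos x + Real.cosh x) : ℝ) : ℂ) =
      ∫ x in Set.Ioi (0 : ℝ), (x : ℂ) ^ (a : ℂ) / (Complex.cos x + Complex.cosh x) := by
  rw [← integral_complex_ofReal]
  refine MeasureTheory.setIntegral_congr_fun measurableSet_Ioi fun x hx ↦ ?_
  push_cast [ofReal_cpow (Set.mem_Ioi.1 hx).le]
  rfl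

theorem ofReal_tsum_rpow_div_cosh (a : ℝ) :
    ((∑' n : ℕ, (-1 : ℝ) ^ n * ((2 * (n : ℝ) + 1) / 2) ^ a /
        Real.cosh ((2 * (n : ℝ) + 1) / 2 * π) : ℝ) : ℂ) =
      ∑' n : ℕ, (-1 : ℂ) ^ n * ((2 * (n : ℂ) + 1) / 2) ^ (a : ℂ) /
        Complex.cosh ((2 * (n : ℂ) + 1) / 2 * π) := by
  rw [ofReal_tsum]
  refine tsum_congr fun n ↦ ?_
  have hpow := ofReal_cpow (x := (2 * n + 1) / 2) (by positivity) a
  push_cast at hpow ⊢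
  rw [hpow]

theorem berndt_integral_order_one_plus (a : ℝ) (ha : 0 < a) :
    (1 - Complex.I ^ ((a : ℂ) + 1)) / (1 + Complex.I) ^ ((a : ℂ) - 1) *
        ((∫ x in Set.Ioi (0 : ℝ), x ^ a / (Real.cos x + Real.cosh x) : ℝ) : ℂ)
      = 2 * (Real.pi : ℂ) ^ ((a : ℂ) + 1) *
        ((∑' n : ℕ, (-1 : ℝ) ^ n * ((2 * (n : ℝ) + 1) / 2) ^ a /
            Real.cosh (((2 * (n : ℝ) + 1) / 2) * Real.pi) : ℝ) : ℂ) := by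
  rw [ofReal_integral_rpow_div_cos_add_cosh, ofReal_tsum_rpow_div_cosh]
  exact berndt_integral_order_one_plus_general a (by rw [ofReal_re]; linarith)
end

section
/- For any real a ≥ 2, ((1 + i^{a+1})/(i(1+i)^{a-1})) · ∫₀^∞ x^a/(cos x - cosh x) dx = 2π^{a+1} · Σ_{n=1}^∞ (-1)^{n+1} n^a / sinh(nπ). -/
open Complex Real

/-!
Since `cos x - cosh x = -2 sinh ((1 - I) x / 2) sinh ((1 + I) x / 2)`, expanding both factors of the
reciprocal into exponentials and integrating termwise turns the integral into a double series of
powers `p ^ (-(a + 1))` over the odd points of a lattice in the right half-plane. Rotating that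
lattice by `1 + I` and by `1 - I` produces the odd Gaussian integers `(2j + 1) ± (2k + 1) I` of the
two quadrants of the right half-plane. Added together, the two series can be summed over each
vertical line by the Lipschitz summation formula, that is, Poisson summation of the integrand of
Euler's integral for `Γ (a + 1)`. What remains is a geometric series in `j` for each frequency `n`,
which sums to `1 / (2 sinh (nπ))`.
-/

open MeasureTheory Set Filter Asymptotics

section Laplace

variable {s p : ℂ}

lemma norm_cpow_mul_cexp_neg_mul (a p : ℂ) {x : ℝ} (hx : 0 < x) :
    ‖(x : ℂ) ^ a * cexp (-(p * x))‖ = x ^ a.re * Real.exp (-(p.re * x)) := by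
  rw [norm_mul, norm_cpow_eq_rpow_re_of_pos hx, Complex.norm_exp, neg_re, re_mul_ofReal]

lemma integrableOn_rpow_mul_exp_neg_mul {a r : ℝ} (ha : -1 < a) (hr : 0 < r) :
    IntegrableOn (fun x : ℝ ↦ x ^ a * Real.exp (-(r * x))) (Ioi 0) := by
  simpa using integrableOn_rpow_mul_exp_neg_mul_rpow ha one_pos hr

lemma integrableOn_cpow_mul_cexp_neg_mul {a : ℂ} (ha : -1 < a.re) (hp : 0 < p.re) :
    IntegrableOn (fun x : ℝ ↦ (x : ℂ) ^ a * cexp (-(p * x))) (Ioi 0) := by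
  refine (integrableOn_rpow_mul_exp_neg_mul ha hp).mono' ?_ ?_
  · exact Measurable.aestronglyMeasurable (by fun_prop)
  · filter_upwards [ae_restrict_mem measurableSet_Ioi] with x hx
    exact (norm_cpow_mul_cexp_neg_mul a p hx).le

lemma differentiableAt_integral_cpow_mul_cexp_neg_mul (hs : 0 < s.re) (hp : 0 < p.re) :
    DifferentiableAt ℂ
      (fun p : ℂ ↦ ∫ x : ℝ in Ioi 0, (x : ℂ) ^ (s - 1) * cexp (-(p * x))) p := by
  have derivative_bound : ∀ᵐ x : ℝ ∂volume.restrict (Ioi 0), ∀ q ∈ Metric.ball p (p.re / 2),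
      ‖(x : ℂ) ^ (s - 1) * (cexp (-(q * x)) * -(1 * x))‖
        ≤ x ^ s.re * Real.exp (-(p.re / 2 * x)) := by
    filter_upwards [ae_restrict_mem measurableSet_Ioi] with x (hx : 0 < x) q hq
    have re_lower : p.re / 2 ≤ q.re := by
      have := (abs_le.1 ((abs_re_le_norm (q - p)).trans (mem_ball_iff_norm.1 hq).le)).1
      rw [sub_re] at this
      linarith
    calc ‖(x : ℂ) ^ (s - 1) * (cexp (-(q * x)) * -(1 * x))‖
        = x ^ (s.re - 1) * Real.exp (-(q.re * x)) * x := by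
          rw [← mul_assoc, norm_mul, norm_cpow_mul_cexp_neg_mul _ _ hx, one_mul, norm_neg,
            norm_real, norm_of_nonneg hx.le, sub_re, one_re]
      _ = x ^ s.re * Real.exp (-(q.re * x)) := by
          rw [mul_right_comm, ← rpow_add_one hx.ne', sub_add_cancel]
      _ ≤ x ^ s.re * Real.exp (-(p.re / 2 * x)) := by gcongr
  refine (hasDerivAt_integral_of_dominated_loc_of_deriv_le
    (F := fun (q : ℂ) (x : ℝ) ↦ (x : ℂ) ^ (s - 1) * cexp (-(q * x)))
    (F' := fun (q : ℂ) (x : ℝ) ↦ (x : ℂ) ^ (s - 1) * (cexp (-(q * x)) * -(1 * x)))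
    (Metric.ball_mem_nhds p (half_pos hp))
    (.of_forall fun q ↦ Measurable.aestronglyMeasurable (by fun_prop))
    (integrableOn_cpow_mul_cexp_neg_mul (by simpa using hs) hp)
    (Measurable.aestronglyMeasurable (by fun_prop)) derivative_bound
    (integrableOn_rpow_mul_exp_neg_mul (by linarith) (half_pos hp)) ?_).2.differentiableAt
  exact .of_forall fun x q _ ↦ (((hasDerivAt_id q).mul_const (x : ℂ)).neg.cexp).const_mul _

-- Both sides are holomorphic in `p` on the right half-plane and agree on the positive reals.
theorem integral_cpow_mul_cexp_neg_mul_Ioi_of_re_pos (hs : 0 < s.re) (hp : 0 < p.re) :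
    ∫ x : ℝ in Ioi 0, (x : ℂ) ^ (s - 1) * cexp (-(p * x)) = Complex.Gamma s * p ^ (-s) := by
  have isOpen_halfPlane : IsOpen {z : ℂ | 0 < z.re} := isOpen_lt continuous_const continuous_re
  have integral_analytic : AnalyticOnNhd ℂ
      (fun p : ℂ ↦ ∫ x : ℝ in Ioi 0, (x : ℂ) ^ (s - 1) * cexp (-(p * x))) {z : ℂ | 0 < z.re} :=
    DifferentiableOn.analyticOnNhd (fun z hz ↦
      (differentiableAt_integral_cpow_mul_cexp_neg_mul hs hz).differentiableWithinAt)
      isOpen_halfPlane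
  have power_analytic : AnalyticOnNhd ℂ (fun p : ℂ ↦ Complex.Gamma s * p ^ (-s))
      {z : ℂ | 0 < z.re} := by
    refine DifferentiableOn.analyticOnNhd (fun z hz ↦ ?_) isOpen_halfPlane
    exact ((differentiableAt_id.cpow_const (Or.inl hz)).const_mul _).differentiableWithinAt
  have eq_of_pos (r : ℝ) (hr : 0 < r) :
      ∫ x : ℝ in Ioi 0, (x : ℂ) ^ (s - 1) * cexp (-(r * x)) = Complex.Gamma s * r ^ (-s) := by
    rw [Complex.integral_cpow_mul_exp_neg_mul_Ioi hs hr, one_div, inv_cpow_ofReal_nonneg hr.le,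
      cpow_neg, mul_comm]
  have tendsto_ofReal : Tendsto ((↑) : ℝ → ℂ) (nhdsWithin 1 {1}ᶜ) (nhdsWithin 1 {1}ᶜ) :=
    continuous_ofReal.continuousWithinAt.tendsto_nhdsWithin fun x hx ↦ by simpa using hx
  refine integral_analytic.eqOn_of_preconnected_of_frequently_eq power_analytic
    (convex_halfSpace_re_gt 0).isPreconnected (z₀ := 1) (by simp) ?_ hp
  refine tendsto_ofReal.frequently (Eventually.frequently ?_)
  filter_upwards [nhdsWithin_le_nhds (lt_mem_nhds zero_lt_one)] with r hr using eq_of_pos r hr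

end Laplace

section Lipschitz

variable {s z : ℂ}

lemma isLittleO_rpow_mul_exp_neg_mul_rpow_atTop (a b : ℝ) {r : ℝ} (hr : 0 < r) :
    (fun x : ℝ ↦ x ^ a * Real.exp (-(r * x))) =o[atTop] (fun x : ℝ ↦ x ^ b) := by
  have product := (isBigO_refl (fun x : ℝ ↦ x ^ a) atTop).mul_isLittleO
    (isLittleO_exp_neg_mul_rpow_atTop hr (b - a))
  refine product.congr' (.of_forall fun x ↦ by simp only [neg_mul]) ?_
  filter_upwards [eventually_gt_atTop 0] with x hx
  rw [← rpow_add hx, add_sub_cancel]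

lemma summable_rpow_mul_exp_neg_mul (a : ℝ) {r : ℝ} (hr : 0 < r) :
    Summable fun n : ℕ ↦ (n : ℝ) ^ a * Real.exp (-(r * n)) :=
  summable_of_isBigO_nat (Real.summable_nat_rpow.2 (by norm_num : (-2 : ℝ) < -1))
    ((isLittleO_rpow_mul_exp_neg_mul_rpow_atTop a (-2) hr).isBigO.comp_tendsto
      tendsto_natCast_atTop_atTop)

lemma summable_add_two_pi_I_mul_int_cpow (z : ℂ) (hs : 1 < s.re) :
    Summable fun k : ℤ ↦ (z + 2 * π * I * k) ^ (-s) := by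
  have linear_growth : (fun k : ℤ ↦ z + 2 * π * I * k) =Θ[cofinite] fun k : ℤ ↦ (k : ℝ) := by
    simp_rw [add_comm z]
    refine (Int.cast_complex_isTheta_cast_real.const_mul_left two_pi_I_ne_zero).add_isLittleO ?_
    exact isLittleO_const_left.2 <| .inr <|
      tendsto_norm_comp_cofinite_atTop_of_isClosedEmbedding Int.isClosedEmbedding_coe_real
  have power_growth : (fun k : ℤ ↦ (z + 2 * π * I * k) ^ s) =Θ[cofinite]
      fun k : ℤ ↦ |(k : ℝ)| ^ s.re :=
    (isTheta_cpow_const_rpow fun h ↦ by linarith).trans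
      (.rpow (.of_forall fun _ ↦ norm_nonneg _) (.of_forall fun _ ↦ abs_nonneg _)
        linear_growth.norm_left.norm_right)
  refine summable_of_isBigO (Real.summable_abs_int_rpow hs) ?_
  refine power_growth.inv.isBigO.congr (fun k ↦ (cpow_neg _ _).symm) fun k ↦ ?_
  exact (Real.rpow_neg (abs_nonneg _) _).symm

/-- The summand of Euler's integral `∫₀^∞ t ^ (s - 1) e ^ (-zt) dt`, extended by zero to `t ≤ 0`. -/
noncomputable def gammaKernel (s z : ℂ) (t : ℝ) : ℂ :=
  ((max t 0 : ℝ) : ℂ) ^ (s - 1) * cexp (-(z * t))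

lemma gammaKernel_of_pos {t : ℝ} (ht : 0 < t) :
    gammaKernel s z t = (t : ℂ) ^ (s - 1) * cexp (-(z * t)) := by
  rw [gammaKernel, max_eq_left ht.le]

lemma gammaKernel_of_nonpos (hs : s ≠ 1) {t : ℝ} (ht : t ≤ 0) : gammaKernel s z t = 0 := by
  rw [gammaKernel, max_eq_right ht, ofReal_zero, zero_cpow (sub_ne_zero.2 hs), zero_mul]

lemma continuous_gammaKernel (hs : 1 < s.re) : Continuous (gammaKernel s z) :=
  ((continuous_ofReal_cpow_const (by simpa using hs)).comp (by fun_prop)).mul (by fun_prop)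

lemma gammaKernel_isBigO_rpow_cocompact (hs : s ≠ 1) (hz : 0 < z.re) (b : ℝ) :
    gammaKernel s z =O[cocompact ℝ] fun t ↦ |t| ^ b := by
  rw [cocompact_eq_atBot_atTop, isBigO_sup]
  constructor
  · refine EventuallyEq.trans_isBigO ?_ (isBigO_zero _ _)
    filter_upwards [eventually_le_atBot 0] with t ht using gammaKernel_of_nonpos hs ht
  · refine ((isLittleO_rpow_mul_exp_neg_mul_rpow_atTop (s - 1).re b hz).isBigO.congr' ?_
      ?_).of_norm_left
    · filter_upwards [eventually_gt_atTop 0] with t ht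
      rw [gammaKernel_of_pos ht, norm_cpow_mul_cexp_neg_mul _ _ ht]
    · filter_upwards [eventually_gt_atTop 0] with t ht
      rw [abs_of_pos ht]

open FourierTransform in
lemma fourier_gammaKernel (hs : 1 < s.re) (hz : 0 < z.re) (ξ : ℝ) :
    𝓕 (gammaKernel s z) ξ = Complex.Gamma s * (z + 2 * π * I * ξ) ^ (-s) := by
  have hs_ne : s ≠ 1 := by rintro rfl; simp at hs
  rw [fourier_real_eq_integral_exp_smul,
    ← integral_cpow_mul_cexp_neg_mul_Ioi_of_re_pos (by linarith) (by simpa using hz),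
    ← setIntegral_eq_integral_of_forall_compl_eq_zero (s := Ioi (0 : ℝ)) fun t ht ↦ by
      rw [gammaKernel_of_nonpos hs_ne (not_lt.1 ht), smul_zero]]
  refine setIntegral_congr_fun measurableSet_Ioi fun t ht ↦ ?_
  simp only [smul_eq_mul]
  rw [gammaKernel_of_pos ht, mul_left_comm, ← Complex.exp_add]
  congr 2
  push_cast
  ring

lemma tsum_int_gammaKernel (hs : s ≠ 1) :
    ∑' n : ℤ, gammaKernel s z n = ∑' n : ℕ, ((n : ℂ) + 1) ^ (s - 1) * cexp (-(z * (n + 1))) := by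
  have succ_injective : Function.Injective fun n : ℕ ↦ (n : ℤ) + 1 := fun m n h ↦ by simpa using h
  rw [← succ_injective.tsum_eq]
  · refine tsum_congr fun n ↦ ?_
    rw [gammaKernel_of_pos (by push_cast; positivity)]
    push_cast
    rfl
  · intro k hk
    have k_pos : 0 < k := by
      by_contra! h
      exact hk (gammaKernel_of_nonpos hs (by exact_mod_cast h))
    exact ⟨(k - 1).toNat, by simp only; omega⟩

theorem hasSum_lipschitz_summation (hs : 1 < s.re) (hz : 0 < z.re) :
    HasSum (fun k : ℤ ↦ Complex.Gamma s * (z + 2 * π * I * k) ^ (-s))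
      (∑' n : ℕ, ((n : ℂ) + 1) ^ (s - 1) * cexp (-(z * (n + 1)))) := by
  have hs_ne : s ≠ 1 := by rintro rfl; simp at hs
  have hsum := (summable_add_two_pi_I_mul_int_cpow z hs).mul_left (Complex.Gamma s)
  have poisson := Real.tsum_eq_tsum_fourier_of_rpow_decay_of_summable (continuous_gammaKernel hs)
    one_lt_two (gammaKernel_isBigO_rpow_cocompact hs_ne hz (-2))
    (by simpa only [fourier_gammaKernel hs hz, ofReal_intCast] using hsum) 0
  simp only [zero_add, QuotientAddGroup.mk_zero, fourier_eval_zero, mul_one,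
    fourier_gammaKernel hs hz, ofReal_intCast, tsum_int_gammaKernel hs_ne] at poisson
  exact poisson ▸ hsum.hasSum

end Lipschitz

section InverseSinh

lemma cexp_neg_odd_mul (j : ℕ) (y : ℂ) :
    cexp (-((2 * j + 1) * y)) = cexp (-y) * cexp (-(2 * y)) ^ j := by
  rw [← Complex.exp_nat_mul, ← Complex.exp_add]
  congr 1
  ring

lemma norm_cexp_neg_two_mul_lt_one {y : ℂ} (hy : 0 < y.re) : ‖cexp (-(2 * y))‖ < 1 := by
  rw [Complex.norm_exp, Real.exp_lt_one_iff]
  simpa using hy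

lemma summable_norm_cexp_neg_odd_mul {y : ℂ} (hy : 0 < y.re) :
    Summable fun j : ℕ ↦ ‖cexp (-((2 * j + 1) * y))‖ := by
  simp_rw [cexp_neg_odd_mul, norm_mul, norm_pow]
  exact (summable_geometric_of_lt_one (norm_nonneg _) (norm_cexp_neg_two_mul_lt_one hy)).mul_left _

lemma hasSum_cexp_neg_odd_mul {y : ℂ} (hy : 0 < y.re) :
    HasSum (fun j : ℕ ↦ cexp (-((2 * j + 1) * y))) (1 / (2 * Complex.sinh y)) := by
  simp_rw [cexp_neg_odd_mul]
  convert! (hasSum_geometric_of_norm_lt_one (norm_cexp_neg_two_mul_lt_one hy)).mul_left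
    (cexp (-y)) using 1
  have two_sinh : 2 * Complex.sinh y = cexp y * (1 - cexp (-(2 * y))) := by
    rw [Complex.two_sinh, mul_sub, mul_one, ← Complex.exp_add]
    congr 2
    ring
  rw [two_sinh, one_div, mul_inv, Complex.exp_neg y]

theorem hasSum_tsum_mul_cexp_neg_odd_mul {ι : Type*} {c y : ι → ℂ} {δ : ℝ} (hδ : 0 < δ)
    (hy : ∀ n, δ ≤ (y n).re) (hc : Summable fun n ↦ ‖c n * cexp (-y n)‖) :
    HasSum (fun j : ℕ ↦ ∑' n, c n * cexp (-((2 * j + 1) * y n)))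
      (∑' n, c n * (1 / (2 * Complex.sinh (y n)))) := by
  have geometric : Summable fun j : ℕ ↦ Real.exp (-(2 * δ)) ^ j :=
    summable_geometric_of_lt_one (Real.exp_pos _).le (Real.exp_lt_one_iff.2 (by linarith))
  have double_sum : Summable fun q : ℕ × ι ↦ c q.2 * cexp (-((2 * q.1 + 1) * y q.2)) := by
    refine .of_norm_bounded (geometric.mul_of_nonneg hc (fun _ ↦ by positivity)
      fun _ ↦ norm_nonneg _) fun q ↦ ?_
    rw [cexp_neg_odd_mul, ← mul_assoc, norm_mul, norm_pow, mul_comm, Complex.norm_exp (-(2 * _))]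
    gcongr
    simpa using hy q.2
  convert! double_sum.hasSum.prod_fiberwise fun j ↦ (double_sum.prod_factor j).hasSum using 1
  have sum_over_odd (n : ι) : HasSum (fun j : ℕ ↦ c n * cexp (-((2 * j + 1) * y n)))
      (c n * (1 / (2 * Complex.sinh (y n)))) :=
    (hasSum_cexp_neg_odd_mul (hδ.trans_le (hy n))).mul_left _
  rw [← (Equiv.prodComm ι ℕ).tsum_eq]
  exact (tsum_congr fun n ↦ (sum_over_odd n).tsum_eq.symm).trans double_sum.prod_symm.tsum_prod.symm

end InverseSinh

section DoubleSeries

variable {s u v : ℂ}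

lemma add_rpow_neg_le_mul_rpow {p q σ : ℝ} (hp : 0 < p) (hq : 0 < q) (hσ : 0 ≤ σ) :
    (p + q) ^ (-σ) ≤ p ^ (-(σ / 2)) * q ^ (-(σ / 2)) := by
  calc (p + q) ^ (-σ) = ((p + q) ^ 2) ^ (-(σ / 2)) := by
        rw [← rpow_natCast, ← rpow_mul (by positivity)]
        congr 1
        push_cast
        ring
    _ ≤ (p * q) ^ (-(σ / 2)) :=
        rpow_le_rpow_of_nonpos (by positivity) (by nlinarith) (by linarith)
    _ = p ^ (-(σ / 2)) * q ^ (-(σ / 2)) := mul_rpow hp.le hq.le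

lemma summable_odd_mul_rpow {τ r : ℝ} (hτ : 1 < τ) (hr : 0 < r) :
    Summable fun j : ℕ ↦ ((2 * j + 1) * r) ^ (-τ) := by
  have odd_injective : Function.Injective fun j : ℕ ↦ 2 * j + 1 := fun i j h ↦ by simpa using h
  have summable_odd := (Real.summable_nat_rpow.2 (neg_lt_neg hτ)).comp_injective odd_injective
  refine (summable_odd.mul_right (r ^ (-τ))).congr fun j ↦ ?_
  rw [Function.comp_apply, ← mul_rpow (by positivity) hr.le]
  push_cast
  rfl

lemma summable_odd_mul_add_odd_mul_rpow {σ r t : ℝ} (hσ : 2 < σ) (hr : 0 < r) (ht : 0 < t) :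
    Summable fun q : ℕ × ℕ ↦ ((2 * q.1 + 1) * r + (2 * q.2 + 1) * t) ^ (-σ) := by
  have hτ : 1 < σ / 2 := by linarith
  refine .of_nonneg_of_le (fun q ↦ by positivity) (fun q ↦ ?_)
    ((summable_odd_mul_rpow hτ hr).mul_of_nonneg (summable_odd_mul_rpow hτ ht)
      (fun _ ↦ by positivity) fun _ ↦ by positivity)
  exact add_rpow_neg_le_mul_rpow (by positivity) (by positivity) (by linarith)

lemma re_odd_mul_add_odd_mul (j k : ℕ) (u v : ℂ) :
    ((2 * j + 1) * u + (2 * k + 1) * v).re = (2 * j + 1) * u.re + (2 * k + 1) * v.re := by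
  simp

lemma re_odd_mul_add_odd_mul_pos (hu : 0 < u.re) (hv : 0 < v.re) (j k : ℕ) :
    0 < ((2 * j + 1) * u + (2 * k + 1) * v).re := by
  rw [re_odd_mul_add_odd_mul]
  positivity

lemma hasSum_cexp_neg_odd_mul_add_odd_mul (hu : 0 < u.re) (hv : 0 < v.re) {x : ℝ} (hx : 0 < x) :
    HasSum (fun q : ℕ × ℕ ↦ cexp (-(((2 * q.1 + 1) * u + (2 * q.2 + 1) * v) * x)))
      (1 / (2 * Complex.sinh (u * x) * (2 * Complex.sinh (v * x)))) := by
  have hux : 0 < (u * x).re := by simpa using mul_pos hu hx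
  have hvx : 0 < (v * x).re := by simpa using mul_pos hv hx
  have summable_u := summable_norm_cexp_neg_odd_mul hux
  have summable_v := summable_norm_cexp_neg_odd_mul hvx
  rw [← one_div_mul_one_div, ← (hasSum_cexp_neg_odd_mul hux).tsum_eq,
    ← (hasSum_cexp_neg_odd_mul hvx).tsum_eq, tsum_mul_tsum_of_summable_norm summable_u summable_v]
  refine (summable_mul_of_summable_norm summable_u summable_v).hasSum.congr_fun fun q ↦ ?_
  rw [← Complex.exp_add]
  congr 1
  ring

lemma summable_integral_norm_cpow_mul_cexp (hs : 2 < s.re) (hu : 0 < u.re) (hv : 0 < v.re) :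
    Summable fun q : ℕ × ℕ ↦ ∫ x : ℝ in Ioi 0,
      ‖(x : ℂ) ^ (s - 1) * cexp (-(((2 * q.1 + 1) * u + (2 * q.2 + 1) * v) * x))‖ := by
  refine ((summable_odd_mul_add_odd_mul_rpow hs hu hv).mul_right (Real.Gamma s.re)).congr
    fun q ↦ ?_
  set p : ℂ := (2 * q.1 + 1) * u + (2 * q.2 + 1) * v
  have hp : 0 < p.re := re_odd_mul_add_odd_mul_pos hu hv q.1 q.2
  rw [← re_odd_mul_add_odd_mul, setIntegral_congr_fun measurableSet_Ioi fun x hx ↦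
    norm_cpow_mul_cexp_neg_mul (s - 1) p hx, sub_re, one_re,
    Real.integral_rpow_mul_exp_neg_mul_Ioi (by linarith) hp, one_div, inv_rpow hp.le,
    rpow_neg hp.le]

theorem hasSum_integral_cpow_div_sinh_mul_sinh (hs : 2 < s.re) (hu : 0 < u.re) (hv : 0 < v.re) :
    HasSum (fun q : ℕ × ℕ ↦
        Complex.Gamma s * ((2 * q.1 + 1) * u + (2 * q.2 + 1) * v) ^ (-s))
      (∫ x : ℝ in Ioi 0,
        (x : ℂ) ^ (s - 1) / (2 * Complex.sinh (u * x) * (2 * Complex.sinh (v * x)))) := by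
  have hpos (q : ℕ × ℕ) := re_odd_mul_add_odd_mul_pos hu hv q.1 q.2
  have termwise := hasSum_integral_of_summable_integral_norm
    (fun q ↦ integrableOn_cpow_mul_cexp_neg_mul (by rw [sub_re, one_re]; linarith) (hpos q))
    (summable_integral_norm_cpow_mul_cexp hs hu hv)
  convert! termwise using 1
  · ext q
    exact (integral_cpow_mul_cexp_neg_mul_Ioi_of_re_pos (by linarith) (hpos q)).symm
  · refine setIntegral_congr_fun measurableSet_Ioi fun x hx ↦ ?_
    simp only [div_eq_mul_one_div ((x : ℂ) ^ (s - 1))]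
    exact ((hasSum_cexp_neg_odd_mul_add_odd_mul hu hv hx).mul_left _).tsum_eq.symm

end DoubleSeries

section Lattice

variable {s : ℂ}

lemma mul_cpow_of_re_nonneg_of_re_pos {x y : ℂ} (hx : 0 ≤ x.re) (hy : 0 < y.re) (s : ℂ) :
    (x * y) ^ s = x ^ s * y ^ s := by
  have hy0 : y ≠ 0 := by rintro rfl; simp at hy
  obtain rfl | hx0 := eq_or_ne x 0
  · obtain rfl | hs := eq_or_ne s 0 <;> simp [*]
  have arg_x := abs_le.1 (abs_arg_le_pi_div_two_iff.2 hx)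
  have arg_y := abs_lt.1 (abs_arg_lt_pi_div_two_iff.2 (Or.inl hy))
  rw [cpow_def_of_ne_zero (mul_ne_zero hx0 hy0), cpow_def_of_ne_zero hx0, cpow_def_of_ne_zero hy0,
    Complex.log_mul hx0 hy0 ⟨by linarith, by linarith⟩, add_mul, Complex.exp_add]

lemma cexp_neg_add_I_mul_pi_mul (c : ℂ) (n : ℕ) :
    cexp (-(π * (c + I) * (n + 1))) = (-1) ^ (n + 1) * cexp (-(c * ((n + 1) * π))) := by
  have exp_neg_pi_mul_I : cexp (-(π * I)) = -1 := by
    rw [Complex.exp_neg, exp_pi_mul_I, inv_neg, inv_one]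
  rw [← exp_neg_pi_mul_I, ← Complex.exp_nat_mul, ← Complex.exp_add]
  congr 1
  push_cast
  ring

lemma hasSum_int_add_odd_mul_I_cpow {c : ℂ} (hs : 1 < s.re) (hc : 0 < c.re) :
    HasSum (fun k : ℤ ↦ Complex.Gamma s * (c + (2 * k + 1) * I) ^ (-s))
      (-(π : ℂ) ^ s *
        ∑' n : ℕ, (-1) ^ n * ((n : ℂ) + 1) ^ (s - 1) * cexp (-(c * ((n + 1) * π)))) := by
  have re_pos (w : ℂ) (hw : w.re = 0) : 0 < (c + w).re := by rwa [add_re, hw, add_zero]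
  have hπ : (π : ℂ) ^ s ≠ 0 := by simp [cpow_eq_zero_iff, Real.pi_ne_zero]
  have lipschitz := (hasSum_lipschitz_summation hs (z := π * (c + I))
    (by simpa using mul_pos Real.pi_pos hc)).mul_left ((π : ℂ) ^ s)
  convert! lipschitz using 1
  · ext k
    rw [show (π : ℂ) * (c + I) + 2 * π * I * k = π * (c + (2 * k + 1) * I) by ring,
      mul_cpow_of_re_nonneg_of_re_pos (by simpa using Real.pi_pos.le) (re_pos _ (by simp)),
      cpow_neg (π : ℂ)]
    field_simp
  · simp_rw [cexp_neg_add_I_mul_pi_mul]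
    rw [neg_mul, ← mul_neg, ← tsum_neg]
    congr 2 with n
    ring

lemma hasSum_nat_add_odd_mul_I_cpow {c : ℂ} (hs : 1 < s.re) (hc : 0 < c.re) :
    HasSum (fun k : ℕ ↦ Complex.Gamma s * (c + (2 * k + 1) * I) ^ (-s) +
        Complex.Gamma s * (c + (2 * k + 1) * -I) ^ (-s))
      (-(π : ℂ) ^ s *
        ∑' n : ℕ, (-1) ^ n * ((n : ℂ) + 1) ^ (s - 1) * cexp (-(c * ((n + 1) * π)))) := by
  refine (hasSum_int_add_odd_mul_I_cpow hs hc).nat_add_neg_add_one.congr_fun fun k ↦ ?_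
  push_cast
  ring_nf

lemma summable_norm_alternating_cpow_mul_cexp (a : ℂ) :
    Summable fun n : ℕ ↦ ‖(-1) ^ n * ((n : ℂ) + 1) ^ a * cexp (-((n + 1) * π))‖ := by
  refine ((summable_nat_add_iff 1).2 (summable_rpow_mul_exp_neg_mul a.re Real.pi_pos)).congr
    fun n ↦ ?_
  have norm_term := norm_cpow_mul_cexp_neg_mul a π (x := n + 1) (by positivity)
  push_cast at norm_term ⊢
  rw [mul_assoc, norm_mul, norm_pow, norm_neg, norm_one, one_pow, one_mul, mul_comm _ (π : ℂ),
    norm_term, ofReal_re]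

end Lattice

section Rotation

variable {s : ℂ}

lemma two_sinh_mul_two_sinh (x y : ℂ) :
    2 * Complex.sinh ((x - y) / 2) * (2 * Complex.sinh ((x + y) / 2))
      = 2 * (Complex.cosh x - Complex.cosh y) := by
  have cosh_x := Complex.cosh_add ((x + y) / 2) ((x - y) / 2)
  have cosh_y := Complex.cosh_sub ((x + y) / 2) ((x - y) / 2)
  rw [show (x + y) / 2 + (x - y) / 2 = x by ring] at cosh_x
  rw [show (x + y) / 2 - (x - y) / 2 = y by ring] at cosh_y
  linear_combination -2 * (cosh_x - cosh_y)

-- Multiplication by `1 + ε` takes `(1 - ε) / 2` and `(1 + ε) / 2` to `1` and `ε`, so it turns the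
-- lattice of the double sinh series into the one spanned by `1` and `ε`.
lemma hasSum_odd_add_odd_mul_cpow {ε : ℂ} (hε : ε = I ∨ ε = -I) (hs : 2 < s.re) :
    HasSum (fun q : ℕ × ℕ ↦ Complex.Gamma s * (2 * q.1 + 1 + (2 * q.2 + 1) * ε) ^ (-s))
      ((1 + ε) ^ (-s) *
        ∫ x : ℝ in Ioi 0, (x : ℂ) ^ (s - 1) / (2 * (Complex.cosh x - Complex.cos x))) := by
  have re_eq_zero : ε.re = 0 := by rcases hε with rfl | rfl <;> simp
  have sq_eq_neg_one : ε * ε = -1 := by rcases hε with rfl | rfl <;> simp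
  have hu : 0 < ((1 - ε) / 2).re := by simp [re_eq_zero]
  have hv : 0 < ((1 + ε) / 2).re := by simp [re_eq_zero]
  have cosh_mul (x : ℂ) : Complex.cosh (ε * x) = Complex.cos x := by
    rcases hε with rfl | rfl <;> simp [mul_comm I, cosh_mul_I]
  convert! (hasSum_integral_cpow_div_sinh_mul_sinh hs hu hv).mul_left ((1 + ε) ^ (-s)) using 1
  · ext q
    rw [mul_left_comm, ← mul_cpow_of_re_nonneg_of_re_pos (by simp [re_eq_zero])
      (re_odd_mul_add_odd_mul_pos hu hv q.1 q.2)]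
    congr 2
    linear_combination (q.1 - q.2 : ℂ) * sq_eq_neg_one
  · congr! 4 with x
    rw [← cosh_mul, ← two_sinh_mul_two_sinh]
    ring_nf

lemma hasSum_alternating_cpow_div_sinh (a : ℂ) :
    HasSum (fun j : ℕ ↦
        ∑' n : ℕ, (-1) ^ n * ((n : ℂ) + 1) ^ a * cexp (-((2 * j + 1) * ((n + 1) * π))))
      (∑' n : ℕ, (-1) ^ n * ((n : ℂ) + 1) ^ a *
        (1 / (2 * Complex.sinh ((n + 1) * π)))) := by
  have pi_le_re (n : ℕ) : π ≤ (((n : ℂ) + 1) * π).re := by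
    rw [re_mul_ofReal, add_re, natCast_re, one_re]
    nlinarith [Real.pi_pos, (n.cast_nonneg : (0 : ℝ) ≤ n)]
  exact hasSum_tsum_mul_cexp_neg_odd_mul (c := fun n : ℕ ↦ (-1) ^ n * ((n : ℂ) + 1) ^ a)
    Real.pi_pos pi_le_re (summable_norm_alternating_cpow_mul_cexp a)

theorem add_cpow_mul_integral_cpow_div_cosh_sub_cos (hs : 2 < s.re) :
    ((1 + I) ^ (-s) + (1 - I) ^ (-s)) *
        ∫ x : ℝ in Ioi 0, (x : ℂ) ^ (s - 1) / (Complex.cosh x - Complex.cos x)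
      = -(π : ℂ) ^ s *
        ∑' n : ℕ, (-1) ^ n * ((n : ℂ) + 1) ^ (s - 1) / Complex.sinh ((n + 1) * π) := by
  have quadrants := (hasSum_odd_add_odd_mul_cpow (.inl rfl) hs).add
    (hasSum_odd_add_odd_mul_cpow (.inr rfl) hs)
  have columns (j : ℕ) := hasSum_nat_add_odd_mul_I_cpow (c := 2 * j + 1) (by linarith : 1 < s.re)
    (by norm_cast; positivity)
  have half_eq := (quadrants.prod_fiberwise columns).unique
    ((hasSum_alternating_cpow_div_sinh (s - 1)).mul_left (-(π : ℂ) ^ s))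
  have integral_half : ∫ x : ℝ in Ioi 0,
        (x : ℂ) ^ (s - 1) / (2 * (Complex.cosh x - Complex.cos x))
      = (∫ x : ℝ in Ioi 0, (x : ℂ) ^ (s - 1) / (Complex.cosh x - Complex.cos x)) / 2 := by
    simp_rw [← integral_div, div_div, mul_comm (2 : ℂ)]
  have series_half : ∑' n : ℕ, (-1) ^ n * ((n : ℂ) + 1) ^ (s - 1) *
        (1 / (2 * Complex.sinh ((n + 1) * π)))
      = (∑' n : ℕ, (-1) ^ n * ((n : ℂ) + 1) ^ (s - 1) / Complex.sinh ((n + 1) * π)) / 2 := by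
    simp_rw [← tsum_div_const, div_div, mul_one_div, mul_comm (2 : ℂ)]
  rw [integral_half, series_half, ← sub_eq_add_neg] at half_eq
  linear_combination 2 * half_eq

lemma one_add_I_cpow_div (s : ℂ) :
    (1 + I ^ s) / (I * (1 + I) ^ (s - 2)) = 2 * ((1 + I) ^ (-s) + (1 - I) ^ (-s)) := by
  have ne_zero {z : ℂ} (hz : 0 < z.re) : z ≠ 0 := by rintro rfl; simp at hz
  have add_ne : 1 + I ≠ 0 := ne_zero (by simp)
  have sub_ne : 1 - I ≠ 0 := ne_zero (by simp)
  have add_cpow_ne : (1 + I) ^ s ≠ 0 := by simp [cpow_eq_zero_iff, add_ne]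
  have sub_cpow_ne : (1 - I) ^ s ≠ 0 := by simp [cpow_eq_zero_iff, sub_ne]
  have quarter_turn : I ^ s * (1 - I) ^ s = (1 + I) ^ s := by
    rw [← mul_cpow_of_re_nonneg_of_re_pos (by simp) (by simp), mul_sub, mul_one, I_mul_I,
      sub_neg_eq_add, add_comm]
  have one_add_I_sq : (1 + I) ^ 2 = 2 * I := by
    rw [add_sq, I_sq]
    ring
  rw [cpow_sub _ _ add_ne, cpow_ofNat, one_add_I_sq, cpow_neg, cpow_neg]
  field_simp
  linear_combination quarter_turn

end Rotation

lemma ofReal_integral_rpow_div_cos_sub_cosh (a : ℝ) :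
    ((∫ x in Ioi (0 : ℝ), x ^ a / (Real.cos x - Real.cosh x) : ℝ) : ℂ)
      = ∫ x : ℝ in Ioi 0, (x : ℂ) ^ (a : ℂ) / (Complex.cos x - Complex.cosh x) := by
  rw [← integral_complex_ofReal]
  refine setIntegral_congr_fun measurableSet_Ioi fun x (hx : 0 < x) ↦ ?_
  push_cast [ofReal_cpow hx.le]
  rfl

lemma ofReal_tsum_alternating_rpow_div_sinh (a : ℝ) :
    ((∑' n : ℕ, (-1 : ℝ) ^ n * ((n : ℝ) + 1) ^ a / Real.sinh (((n : ℝ) + 1) * π) : ℝ) : ℂ)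
      = ∑' n : ℕ, (-1) ^ n * ((n : ℂ) + 1) ^ (a : ℂ) / Complex.sinh ((n + 1) * π) := by
  rw [Complex.ofReal_tsum]
  refine tsum_congr fun n ↦ ?_
  push_cast [ofReal_cpow (n.cast_add_one_pos.le : (0 : ℝ) ≤ n + 1)]
  rfl

theorem berndt_integral_order_one_minus_general (a : ℂ) (ha : 1 < a.re) :
    (1 + I ^ (a + 1)) / (I * (1 + I) ^ (a - 1)) *
        ∫ x : ℝ in Ioi 0, (x : ℂ) ^ a / (Complex.cos x - Complex.cosh x)
      = 2 * (π : ℂ) ^ (a + 1) *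
        ∑' n : ℕ, (-1) ^ n * ((n : ℂ) + 1) ^ a / Complex.sinh ((n + 1) * π) := by
  have re_gt : 2 < (a + 1).re := by rw [add_re, one_re]; linarith
  have evaluation := add_cpow_mul_integral_cpow_div_cosh_sub_cos re_gt
  have constant := one_add_I_cpow_div (a + 1)
  have sign_change : ∫ x : ℝ in Ioi 0, (x : ℂ) ^ a / (Complex.cos x - Complex.cosh x)
      = -∫ x : ℝ in Ioi 0, (x : ℂ) ^ a / (Complex.cosh x - Complex.cos x) := by
    simp_rw [← integral_neg, ← div_neg, neg_sub]
  rw [show a + 1 - 2 = a - 1 by ring] at constant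
  rw [add_sub_cancel_right] at evaluation
  rw [constant, sign_change]
  linear_combination -2 * evaluation

theorem berndt_integral_order_one_minus (a : ℝ) (ha : 2 ≤ a) :
    (1 + Complex.I ^ ((a : ℂ) + 1)) / (Complex.I * (1 + Complex.I) ^ ((a : ℂ) - 1)) *
        ((∫ x in Set.Ioi (0 : ℝ), x ^ a / (Real.cos x - Real.cosh x) : ℝ) : ℂ)
      = 2 * (Real.pi : ℂ) ^ ((a : ℂ) + 1) *
        ((∑' n : ℕ, (-1 : ℝ) ^ n * ((n : ℝ) + 1) ^ a /
            Real.sinh (((n : ℝ) + 1) * Real.pi) : ℝ) : ℂ) := by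
  rw [ofReal_integral_rpow_div_cos_sub_cosh, ofReal_tsum_alternating_rpow_div_sinh]
  exact berndt_integral_order_one_minus_general a (by rw [ofReal_re]; linarith)
end
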